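/- arXiv:2301.12924 — 5 statements merged into one kernel-verified Lean document; each statement's English description precedes it below -/
import Mathlib

section
/- For every real number ε with 0 < ε ≤ 1/2 and every finite simple 2-degenerate graph G with maximum degree Δ, if Δ ≥ 4^(1/(2ε)), then the strong chromatic index of G satisfies χ'_s(G) ≤ 5Δ − Δ^(1/2−ε) + 2. -/
open Classical

/-- A strong edge-coloring of `G` with colors in `Fin n`: any two distinct edges that share
an endpoint, or whose endpoints are joined by an edge of `G`, receive different colors. -/
def SimpleGraph.IsStrongEdgeColoring {V : Type*} (G : SimpleGraph V) {n : ℕ}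
    (C : G.edgeSet → Fin n) : Prop :=
  ∀ e f : G.edgeSet, e ≠ f →
    (∃ x ∈ (e : Sym2 V), ∃ y ∈ (f : Sym2 V), x = y ∨ G.Adj x y) → C e ≠ C f

/-- The strong chromatic index: the least number of colors in a strong edge-coloring. -/
noncomputable def SimpleGraph.strongChromaticIndex {V : Type*} (G : SimpleGraph V) : ℕ :=
  sInf {n : ℕ | ∃ C : G.edgeSet → Fin n, G.IsStrongEdgeColoring C}

/-- A graph is `k`-degenerate if every (induced) subgraph has minimum degree at most `k`. -/
def SimpleGraph.IsKDegenerate {V : Type*} [Fintype V] [DecidableEq V]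
    (G : SimpleGraph V) [DecidableRel G.Adj] (k : ℕ) : Prop :=
  ∀ S : Finset V, S.Nonempty → ∃ v ∈ S, (S.filter (G.Adj v)).card ≤ k

/-!
Order the vertices so that every vertex has at most two larger neighbors, its parents, and color the
edges from above: at a vertex `v`, the edges to all its children are colored at once, with colors
from a palette of `v` that avoids the colors blocked at the parents of `v`. Two spare colors in the
palette make it possible to recolor the top edges of the children of `v` that clash with the edges
from `v` to its parents. At most `Δ + 2` colors are blocked at each vertex, and so `5 * Δ + O(1)`
colors suffice for a greedy choice.

About `√Δ / 2` colors are saved as follows. The edges from `v` to its side children, whose other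
parent is larger than `v`, get distinct colors by Hall's theorem. If Hall's condition fails for a
set of side children, then this set contains nearly all of them, and some large set `Q` of colors is
blocked at the top parent of each of them. To exclude this, the side children are divided in advance
into groups of `g + 1`, where `g < √Δ / 2`. Let `A` be the set of colors blocked at the top parent
of the leader of a group, the one whose top edge is colored first. The top edges of the others are
colored so that `A` either contains more than `g` colors that are not blocked at their upper end, or
contains their color as a new one. A failing set contains a full group. Now `Q ⊆ A` omits at most
`g` colors of `A`, which leaves only the second alternative, so the `g + 1` top edges of the group
have distinct colors in `A`, and none of these colors lies in `Q`: a contradiction.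
-/

namespace TwoDegenerate

open Finset

section SystemsOfRepresentatives

variable {α β : Type*} [Nonempty β]

theorem exists_injOn_mem_of_hall [DecidableEq β] (s : Finset α) (t : α → Finset β)
    (h : ∀ I ⊆ s, #I ≤ #(I.biUnion t)) :
    ∃ f : α → β, Set.InjOn f s ∧ ∀ a ∈ s, f a ∈ t a := by
  have hall : ∀ I : Finset s, #I ≤ #(I.biUnion fun a => t a) := by
    intro I
    have hI := h (I.map (.subtype _)) fun a ha => property_of_mem_map_subtype I ha
    rwa [card_map, map_eq_image, image_biUnion] at hI
  obtain ⟨f, hf, hft⟩ := (all_card_le_biUnion_card_iff_exists_injective _).1 hall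
  refine ⟨fun a => if ha : a ∈ s then f ⟨a, ha⟩ else Classical.arbitrary β, ?_, ?_⟩
  · intro a ha b hb hab
    rw [mem_coe] at ha hb
    simp only [ha, hb, dif_pos] at hab
    exact congrArg Subtype.val (hf hab)
  · intro a ha
    simp only [ha, dif_pos]
    exact hft ⟨a, ha⟩

theorem exists_injOn_mem_of_two_tiers (r s : Finset α) (t : α → Finset β)
    (hr : ∀ a ∈ r, #r ≤ #(t a)) (hs : ∀ a ∈ s, a ∉ r → #s ≤ #(t a)) :
    ∃ f : α → β, Set.InjOn f s ∧ ∀ a ∈ s, f a ∈ t a := by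
  classical
  refine exists_injOn_mem_of_hall s t fun I hI => ?_
  have le_biUnion : ∀ a ∈ I, #(t a) ≤ #(I.biUnion t) :=
    fun a ha => card_le_card (subset_biUnion_of_mem t ha)
  by_cases hIr : I ⊆ r
  · obtain rfl | ⟨a, ha⟩ := I.eq_empty_or_nonempty
    · simp
    · exact (card_le_card hIr).trans ((hr a (hIr ha)).trans (le_biUnion a ha))
  · obtain ⟨a, ha, har⟩ := not_subset.1 hIr
    exact (card_le_card hI).trans ((hs a (hI ha) har).trans (le_biUnion a ha))

theorem exists_injOn_mem_of_card_le (s : Finset α) (t : α → Finset β)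
    (h : ∀ a ∈ s, #s ≤ #(t a)) :
    ∃ f : α → β, Set.InjOn f s ∧ ∀ a ∈ s, f a ∈ t a :=
  exists_injOn_mem_of_two_tiers s s t h fun a ha _ => h a ha

theorem exists_injOn_recolor {s r : Finset α} {p o : Finset β} {f : α → β} (hrs : r ⊆ s)
    (hf : Set.InjOn f s) (hfp : Set.MapsTo f s p) (hcard : #s + #o ≤ #p) :
    ∃ f' : α → β, Set.InjOn f' s ∧ Set.MapsTo f' s p ∧ (∀ a ∉ r, f' a = f a) ∧
      ∀ a ∈ r, f' a ∉ o ∧ (f a ∉ o → f' a = f a) := by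
  classical
  set z := r.filter (f · ∈ o)
  have hzs : z ⊆ s := (filter_subset _ _).trans hrs
  have card_z : #z ≤ #(s.image f ∩ o) := by
    rw [← card_image_of_injOn (hf.mono (coe_subset.2 hzs))]
    exact card_le_card (by grind)
  have spare : #z ≤ #(p \ (s.image f ∪ o)) := by
    have := le_card_sdiff (s.image f ∪ o) p
    have := card_union_add_card_inter (s.image f) o
    have := card_image_of_injOn hf
    omega
  obtain ⟨h, hinj, hmem⟩ :=
    exists_injOn_mem_of_card_le z (fun _ => p \ (s.image f ∪ o)) fun _ _ => spare
  simp only [mem_sdiff, mem_union, mem_image, not_or, not_exists, not_and] at hmem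
  refine ⟨fun a => if a ∈ z then h a else f a, ?_, ?_, ?_, ?_⟩
  · intro a ha b hb hab
    have := hmem a
    have := hmem b
    have := @hinj a
    have := @hf a ha b hb
    grind
  · intro a ha
    have := hmem a
    have := hfp ha
    grind
  · grind
  · grind

end SystemsOfRepresentatives

theorem exists_superset_card_filter_inter_le {α β : Type*} [DecidableEq β] (s : Finset α)
    (t : α → Finset β) (Φ : Finset β) (g K : ℕ)
    (ht : ∀ a ∈ s, g < #(t a)) :
    ∃ F, Φ ⊆ F ∧ #F ≤ #Φ + (g + 1) * (#s - K) ∧ #{a ∈ s | #(t a ∩ F) ≤ g} ≤ K := by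
  classical
  obtain ⟨r, hrs, hr⟩ := exists_subset_card_eq (s := s) (n := min K #s) (min_le_right _ _)
  have : ∀ a, ∃ d, a ∈ s → d ⊆ t a ∧ #d = g + 1 := fun a => by
    by_cases ha : a ∈ s
    · exact (exists_subset_card_eq (ht a ha)).imp fun d hd _ => hd
    · exact ⟨∅, fun h => absurd h ha⟩
  choose d hd using this
  refine ⟨Φ ∪ (s \ r).biUnion d, subset_union_left, (card_union_le _ _).trans ?_, ?_⟩
  · have := card_biUnion_le_card_mul (s \ r) d (g + 1) fun a ha => (hd a (mem_sdiff.1 ha).1).2.le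
    rw [card_sdiff_of_subset hrs, hr, mul_comm] at this
    have : #s - min K #s = #s - K := by omega
    grind
  · refine (card_le_card fun a ha => ?_).trans (hr.le.trans (min_le_left _ _))
    obtain ⟨has, hag⟩ := mem_filter.1 ha
    by_contra har
    have : d a ⊆ t a ∩ (Φ ∪ (s \ r).biUnion d) :=
      subset_inter (hd a has).1 ((subset_biUnion_of_mem d (mem_sdiff.2 ⟨has, har⟩)).trans
        subset_union_right)
    have := card_le_card this
    have := (hd a has).2
    omega

/-- Peel off sets of size `m` one after the other, each represented by its element of largest key.
A set that is not contained in `I` uses up a point of `s \ I`, so `n` of them suffice. -/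
theorem exists_leader {α ι : Type*} [DecidableEq α] [LinearOrder ι] (key : α → ι) {m : ℕ}
    (hm : 0 < m) (n : ℕ) (s : Finset α) :
    ∃ lead : α → α, (∀ a ∈ s, lead a ∈ s ∧ key a ≤ key (lead a) ∧
        #{b ∈ s | lead b = lead a} ≤ m) ∧
      ∀ I ⊆ s, n * m ≤ #s → #(s \ I) < n →
        ∃ r ∈ I, lead r = r ∧ {b ∈ s | lead b = r} ⊆ I ∧ #{b ∈ s | lead b = r} = m := by
  induction n generalizing s with
  | zero =>
    refine ⟨id, fun a ha => ⟨ha, le_rfl, ?_⟩, fun I _ _ h => absurd h (Nat.not_lt_zero _)⟩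
    simp only [id_eq, filter_eq', if_pos ha, card_singleton]
    exact hm
  | succ n ih =>
    by_cases hs : (n + 1) * m ≤ #s
    · have hms : m ≤ #s := le_trans (Nat.le_mul_of_pos_left m n.succ_pos) hs
      obtain ⟨w, hws, hw⟩ := exists_subset_card_eq hms
      obtain ⟨r, hrw, hr⟩ := exists_max_image w key (card_pos.1 (hw ▸ hm))
      obtain ⟨lead, hlead, hfull⟩ := ih (s \ w)
      have block_eq : ∀ b ∉ w, {a ∈ s | (if a ∈ w then r else lead a) = b} =
          {a ∈ s \ w | lead a = b} := by grind
      have block_r : {a ∈ s | (if a ∈ w then r else lead a) = r} = w := by grind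
      refine ⟨fun a => if a ∈ w then r else lead a, fun a ha => ?_, fun I hI _ hIn => ?_⟩
      · by_cases haw : a ∈ w
        · simp only [haw, if_true, block_r]
          exact ⟨hws hrw, hr a haw, hw.le⟩
        · obtain ⟨hmem, hkey, hcard⟩ := hlead a (mem_sdiff.2 ⟨ha, haw⟩)
          simp only [haw, if_false, block_eq _ (mem_sdiff.1 hmem).2]
          exact ⟨(mem_sdiff.1 hmem).1, hkey, hcard⟩
      · by_cases hwI : w ⊆ I
        · exact ⟨r, hwI hrw, by simp only [hrw, if_true], by rwa [block_r], by rw [block_r, hw]⟩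
        · obtain ⟨x, hxw, hxI⟩ := not_subset.1 hwI
          have missing : #((s \ w) \ (I \ w)) < n := by
            refine Nat.lt_of_lt_of_le (card_lt_card (t := s \ I) ⟨by grind, fun h => ?_⟩)
              (Nat.lt_succ_iff.1 hIn)
            have := h (mem_sdiff.2 ⟨hws hxw, hxI⟩)
            grind
          have card_rest : n * m ≤ #(s \ w) := by
            rw [card_sdiff_of_subset hws, hw]
            rw [Nat.succ_mul] at hs
            omega
          obtain ⟨q, hq, hqq, hqI, hqm⟩ :=
            hfull (I \ w) (sdiff_subset_sdiff hI le_rfl) card_rest missing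
          obtain ⟨hqI', hqw⟩ := mem_sdiff.1 hq
          refine ⟨q, hqI', by simp only [hqw, if_false, hqq], ?_, ?_⟩
          · rw [block_eq q hqw]
            exact hqI.trans sdiff_subset
          · rw [block_eq q hqw, hqm]
    · obtain ⟨lead, hlead, -⟩ := ih s
      exact ⟨lead, hlead, fun I _ h => absurd h hs⟩

section Secured

variable {α β : Type*} [DecidableEq β] {g d : ℕ}

/-- Let `A` and `T` be the sets of colors blocked at the upper ends of the top edges of a leader and
of a child of the same group, let `c` be the color of the child's top edge, and let `E` be the
colors of the top edges of the group that were colored earlier. `Secured g d A T E c` is what the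
color `c` has to achieve for the group not to obstruct Hall's condition later on: `A` is small, or
`A` has many colors outside `T`, or `c` is a new color of `A`. -/
def Secured (g d : ℕ) (A T E : Finset β) (c : β) : Prop :=
  #A + g < d ∨ g < #(A \ T) ∨ c ∈ A \ E

theorem exists_injOn_secured [Fintype β] [Nonempty β] (s : Finset α) (Φ O : Finset β)
    (A E : α → Finset β) {K : ℕ} (hE : ∀ a ∈ s, #(E a) ≤ g) (hK : K + 3 * g + #O ≤ d)
    (hd : 2 * g + #O < d) (hcard : #Φ + (g + 1) * (#s - K) + #s ≤ Fintype.card β) :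
    ∃ (ψ : α → β) (F : Finset β), Φ ⊆ F ∧ #F ≤ #Φ + (g + 1) * (#s - K) ∧ Set.InjOn ψ s ∧
      ∀ a ∈ s, ψ a ∉ F ∧ ∀ P, Disjoint P F → Secured g d (A a) (P ∪ O) (E a) (ψ a) := by
  classical
  set big := s.filter fun a => d ≤ #(A a) + g
  obtain ⟨F, hΦF, hF, hK'⟩ :=
    exists_superset_card_filter_inter_le big (fun a => A a \ O) Φ g K fun a ha => by
      have := (mem_filter.1 ha).2
      have := le_card_sdiff O (A a)
      omega
  set poor := big.filter fun a => #((A a \ O) ∩ F) ≤ g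
  have card_big : (g + 1) * (#big - K) ≤ (g + 1) * (#s - K) := by
    gcongr
    exact filter_subset _ _
  have card_poor : ∀ a ∈ poor, #poor ≤ #(A a \ (F ∪ E a)) := fun a ha => by
    obtain ⟨hbig, hint⟩ := mem_filter.1 ha
    obtain ⟨has, hA⟩ := mem_filter.1 hbig
    have cover : A a ⊆ (A a \ (F ∪ E a)) ∪ ((A a \ O) ∩ F ∪ (O ∪ E a)) := by grind
    have := card_le_card cover
    have := card_union_le (A a \ (F ∪ E a)) ((A a \ O) ∩ F ∪ (O ∪ E a))
    have := card_union_le ((A a \ O) ∩ F) (O ∪ E a)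
    have := card_union_le O (E a)
    have := hE a has
    omega
  have card_compl : #s ≤ #Fᶜ := by
    rw [Finset.card_compl]
    omega
  obtain ⟨ψ, hinj, hψ⟩ := exists_injOn_mem_of_two_tiers poor s
    (fun a => if a ∈ poor then A a \ (F ∪ E a) else Fᶜ)
    (fun a ha => by simpa only [ha, if_true] using card_poor a ha)
    (fun a _ ha => by simpa only [ha, if_false] using card_compl)
  refine ⟨ψ, F, hΦF, hF.trans (by omega), hinj, fun a ha => ?_⟩
  specialize hψ a ha
  by_cases hpoor : a ∈ poor
  · simp only [hpoor, if_true, mem_sdiff, mem_union, not_or] at hψ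
    exact ⟨hψ.2.1, fun _ _ => Or.inr (Or.inr (mem_sdiff.2 ⟨hψ.1, hψ.2.2⟩))⟩
  · simp only [hpoor, if_false, mem_compl] at hψ
    refine ⟨hψ, fun P hP => (lt_or_ge (#(A a) + g) d).imp_right fun hbig => Or.inl ?_⟩
    have many : g < #((A a \ O) ∩ F) :=
      not_le.1 fun h => hpoor (mem_filter.2 ⟨mem_filter.2 ⟨ha, hbig⟩, h⟩)
    refine many.trans_le (card_le_card fun c hc => ?_)
    obtain ⟨hc, hcF⟩ := mem_inter.1 hc
    obtain ⟨hcA, hcO⟩ := mem_sdiff.1 hc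
    exact mem_sdiff.2 ⟨hcA, notMem_union.2 ⟨Finset.disjoint_right.1 hP hcF, hcO⟩⟩

variable {κ : Type*} [LinearOrder κ] {key : α → κ} {σ : α → β} {T : α → Finset β}

theorem card_le_of_secured {B : Finset α} {A Q : Finset β} (hQA : Q ⊆ A) (hQ : d ≤ #Q + g)
    (hA : #A ≤ d) (hT : ∀ a ∈ B, Q ⊆ T a) (hσ : ∀ a ∈ B, σ a ∉ Q)
    (hinj : Set.InjOn (fun a => (key a, σ a)) B)
    (hsec : ∀ a ∈ B, Secured g d A (T a) ({b ∈ B | key a < key b}.image σ) (σ a)) : #B ≤ g := by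
  have card_diff : #(A \ Q) ≤ g := by
    rw [card_sdiff_of_subset hQA]
    omega
  have fresh : ∀ a ∈ B, σ a ∈ A \ {b ∈ B | key a < key b}.image σ := fun a ha => by
    rcases hsec a ha with h | h | h
    · have := card_le_card hQA
      omega
    · exact absurd (card_le_card (sdiff_subset_sdiff (le_refl A) (hT a ha))) (by omega)
    · exact h
  have ne_of_lt : ∀ a ∈ B, ∀ b ∈ B, key a < key b → σ b ≠ σ a := fun a ha b hb hlt heq =>
    (mem_sdiff.1 (fresh a ha)).2 (mem_image.2 ⟨b, mem_filter.2 ⟨hb, hlt⟩, heq⟩)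
  refine (card_le_card_of_injOn σ (fun a ha => ?_) fun a ha b hb hab => ?_).trans card_diff
  · exact mem_sdiff.2 ⟨(mem_sdiff.1 (fresh a ha)).1, hσ a ha⟩
  · rcases lt_trichotomy (key a) (key b) with h | h | h
    · exact absurd hab.symm (ne_of_lt a ha b hb h)
    · exact hinj ha hb (Prod.ext h hab)
    · exact absurd hab (ne_of_lt b hb a ha h)

theorem exists_injOn_notMem_of_secured [Fintype β] [Nonempty β] {s : Finset α} {F : Finset β}
    (hF : #F + #s + d ≤ Fintype.card β + g + 1) (hT : ∀ a ∈ s, #(T a) ≤ d)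
    (hFT : ∀ a ∈ s, ¬Disjoint F (T a)) (hσ : ∀ a ∈ s, σ a ∈ F)
    (hinj : Set.InjOn (fun a => (key a, σ a)) s)
    (hsec : ∀ I ⊆ s, Fintype.card β + 1 < #F + d + #I → ∃ B ⊆ I, ∃ r ∈ B, g < #B ∧
      ∀ a ∈ B, Secured g d (T r) (T a) ({b ∈ B | key a < key b}.image σ) (σ a)) :
    ∃ ψ : α → β, Set.InjOn ψ s ∧ ∀ a ∈ s, ψ a ∉ F ∪ T a := by
  suffices hall : ∀ I ⊆ s, #I ≤ #(I.biUnion fun a => (F ∪ T a)ᶜ) by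
    obtain ⟨ψ, hψ, hmem⟩ := exists_injOn_mem_of_hall s _ hall
    exact ⟨ψ, hψ, fun a ha => mem_compl.1 (hmem a ha)⟩
  intro I hI
  by_contra! hlt
  set W := I.biUnion fun a => (F ∪ T a)ᶜ with hW
  obtain ⟨a, ha⟩ : I.Nonempty := card_pos.1 (Nat.zero_lt_of_lt hlt)
  have card_list : Fintype.card β + 1 ≤ #W + #F + d := by
    have := card_le_card (subset_biUnion_of_mem (fun a => (F ∪ T a)ᶜ) ha)
    rw [← hW, card_compl] at this
    have := card_pos.2 (not_disjoint_iff_nonempty_inter.1 (hFT a (hI ha)))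
    have := card_union_add_card_inter F (T a)
    have := hT a (hI ha)
    omega
  obtain ⟨B, hB, r, hr, hgB, hBsec⟩ := hsec I hI (by omega)
  -- The colors `Q` that are on no list of `I` and not in `F` are blocked for every element of `I`.
  set Q := (F ∪ W)ᶜ
  have hQT : ∀ b ∈ I, Q ⊆ T b := fun b hb c hc => by
    by_contra hcT
    simp only [Q, hW, mem_compl, mem_union, mem_biUnion, not_or, not_exists, not_and] at hc
    exact hc.2 b hb hc.1 hcT
  have hQcard : d ≤ #Q + g := by
    have := card_union_le F W
    have := card_le_card hI
    have : #Q = _ := card_compl (F ∪ W)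
    omega
  refine hgB.not_ge (card_le_of_secured (hQT r (hB hr)) hQcard (hT r (hI (hB hr)))
    (fun b hb => hQT b (hB hb)) (fun b hb h => ?_) (hinj.mono (coe_subset.2 (hB.trans hI))) hBsec)
  exact mem_compl.1 h (mem_union_left _ (hσ b (hI (hB hb))))

end Secured

section DegenerateOrder

variable {V : Type*} [Fintype V] [DecidableEq V] {G : SimpleGraph V} [DecidableRel G.Adj] {k : ℕ}

theorem exists_rank (hG : G.IsKDegenerate k) (s : Finset V) :
    ∃ rank : V → ℕ, Set.InjOn rank s ∧
      ∀ v ∈ s, #{u ∈ s | G.Adj v u ∧ rank v < rank u} ≤ k := by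
  induction s using Finset.strongInduction with
  | H s ih =>
    obtain rfl | hs := s.eq_empty_or_nonempty
    · exact ⟨fun _ => 0, by simp, by simp⟩
    obtain ⟨v, hv, hvk⟩ := hG s hs
    obtain ⟨rank, hinj, hrank⟩ := ih (s.erase v) (erase_ssubset hv)
    refine ⟨fun u => if u = v then 0 else rank u + 1, fun a ha b hb hab => ?_, fun a ha => ?_⟩
    · have := @hinj a
      have := @hinj b
      grind
    · by_cases hav : a = v
      · subst hav
        exact (card_le_card (monotone_filter_right s fun _ _ h => h.1)).trans hvk
      · refine (card_le_card fun u hu => ?_).trans (hrank a (mem_erase.2 ⟨hav, ha⟩))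
        grind

theorem exists_linearOrder (hG : G.IsKDegenerate k) :
    ∃ _ : LinearOrder V, ∀ v, #{u | G.Adj v u ∧ v < u} ≤ k := by
  obtain ⟨rank, hinj, hrank⟩ := exists_rank hG univ
  refine ⟨LinearOrder.lift' rank (Set.injOn_univ.1 (by simpa using hinj)), fun v => ?_⟩
  exact hrank v (mem_univ v)

end DegenerateOrder

section Family

variable {V : Type*} [Fintype V] [LinearOrder V] (G : SimpleGraph V) [DecidableRel G.Adj]

/-- The upper neighbors of `v`; there are at most two of them in a degenerate order of a
2-degenerate graph. -/
def parents (v : V) : Finset V := {u | G.Adj v u ∧ v < u}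

/-- The lower neighbors of `v`. -/
def children (v : V) : Finset V := {u | G.Adj v u ∧ u < v}

/-- The largest parent of `y`, with junk value `y` if `y` has no parents. The edge from `y` to its
top parent is the top edge of `y`; it is colored before the other edge to a parent. -/
def topParent (y : V) : V := (insert y (parents G y)).max' (insert_nonempty _ _)

/-- The children of `v` whose top edge leads to `v`. -/
def topChildren (v : V) : Finset V := {y ∈ children G v | topParent G y = v}

/-- The children of `v` whose top edge leads elsewhere. -/
def sideChildren (v : V) : Finset V := {y ∈ children G v | topParent G y ≠ v}

variable {G} {u v w y : V}

theorem mem_parents : u ∈ parents G v ↔ G.Adj v u ∧ v < u := by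
  simp only [parents, mem_filter_univ]

theorem mem_children : u ∈ children G v ↔ v ∈ parents G u := by
  simp only [children, mem_parents, mem_filter_univ, G.adj_comm]

theorem lt_of_mem_parents (h : u ∈ parents G v) : v < u := (mem_parents.1 h).2

theorem card_children_add_card_parents_le (v : V) :
    #(children G v) + #(parents G v) ≤ G.maxDegree := by
  rw [← card_union_of_disjoint]
  · refine (card_le_card fun u hu => ?_).trans
      ((G.card_neighborFinset_eq_degree v).trans_le (G.degree_le_maxDegree v))
    rw [G.mem_neighborFinset]
    exact (mem_union.1 hu).elim (fun h => (mem_parents.1 (mem_children.1 h)).1.symm)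
      fun h => (mem_parents.1 h).1
  · exact disjoint_left.2 fun u hc hp =>
      (lt_of_mem_parents (mem_children.1 hc)).asymm (lt_of_mem_parents hp)

theorem le_topParent (h : v ∈ parents G y) : v ≤ topParent G y :=
  le_max' _ _ (mem_insert_of_mem h)

theorem topParent_mem_parents (h : v ∈ parents G y) : topParent G y ∈ parents G y :=
  (mem_insert.1 (max'_mem _ _)).resolve_left fun e =>
    (lt_of_mem_parents h).not_ge ((le_topParent h).trans_eq e)

theorem mem_topChildren : y ∈ topChildren G v ↔ v ∈ parents G y ∧ topParent G y = v := by
  simp only [topChildren, mem_filter, mem_children]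

theorem mem_sideChildren : y ∈ sideChildren G v ↔ v ∈ parents G y ∧ topParent G y ≠ v := by
  simp only [sideChildren, mem_filter, mem_children]

theorem topChildren_union_sideChildren (v : V) :
    topChildren G v ∪ sideChildren G v = children G v :=
  filter_union_filter_not_eq _ _

theorem disjoint_topChildren_sideChildren (v : V) :
    Disjoint (topChildren G v) (sideChildren G v) :=
  disjoint_filter_filter_not _ _ _

theorem mem_topChildren_topParent (h : y ∈ sideChildren G v) :
    y ∈ topChildren G (topParent G y) :=
  mem_topChildren.2 ⟨topParent_mem_parents (mem_sideChildren.1 h).1, rfl⟩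

theorem lt_topParent (h : y ∈ sideChildren G v) : v < topParent G y :=
  (le_topParent (mem_sideChildren.1 h).1).lt_of_ne' (mem_sideChildren.1 h).2

theorem notMem_sideChildren_of_le (h : v ≤ w) : w ∉ sideChildren G v := fun hw =>
  (lt_of_mem_parents (mem_sideChildren.1 hw).1).not_ge h

theorem eq_of_mem_sideChildren (hG : #(parents G y) ≤ 2) (hv : y ∈ sideChildren G v)
    (hw : y ∈ sideChildren G w) : v = w := by
  rw [mem_sideChildren] at hv hw
  by_contra hvw
  have : {v, w, topParent G y} ⊆ parents G y := by
    simp only [insert_subset_iff, singleton_subset_iff, hv.1, hw.1, topParent_mem_parents hv.1,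
      and_self]
  have := card_le_card this
  rw [card_eq_three.2 ⟨v, w, topParent G y, hvw, hv.2.symm, hw.2.symm, rfl⟩] at this
  omega

end Family

section Groups

variable {V : Type*} [Fintype V] [LinearOrder V] (G : SimpleGraph V) [DecidableRel G.Adj]

/-- The side children of `v` with the same leader as `y`. -/
def group (lead : V → V → V) (v y : V) : Finset V := {z ∈ sideChildren G v | lead v z = lead v y}

/-- `lead v` divides the side children of `v` into groups of at most `g + 1`, with the top edge of
the leader colored first within each group. If `v` has many side children, then every set of all but
fewer than `g` of them contains a full group. -/
structure IsLeader (g : ℕ) (lead : V → V → V) : Prop where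
  lead_mem : ∀ {v y}, y ∈ sideChildren G v → lead v y ∈ sideChildren G v
  topParent_le : ∀ {v y}, y ∈ sideChildren G v → topParent G y ≤ topParent G (lead v y)
  card_group_le : ∀ {v y}, y ∈ sideChildren G v → #(group G lead v y) ≤ g + 1
  exists_full_group : ∀ {v I}, I ⊆ sideChildren G v → #(sideChildren G v) < #I + g →
    G.maxDegree ≤ #I + g + 1 →
      ∃ r ∈ I, lead v r = r ∧ group G lead v r ⊆ I ∧ #(group G lead v r) = g + 1

variable {G} {g : ℕ}

theorem exists_isLeader (hg : 4 * g ^ 2 < G.maxDegree) : ∃ lead, IsLeader G g lead := by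
  choose lead hlead hfull using fun v =>
    exists_leader (topParent G) g.succ_pos g (sideChildren G v)
  refine ⟨lead, fun h => (hlead _ _ h).1, fun h => (hlead _ _ h).2.1,
    fun h => (hlead _ _ h).2.2, fun {v I} hI hIs hIΔ => ?_⟩
  have hIcard := card_le_card hI
  have many : g * (g + 1) ≤ #(sideChildren G v) := by
    have : 2 * g ≤ 3 * g ^ 2 := by nlinarith [Nat.le_self_pow two_ne_zero g]
    linarith
  have missing : #(sideChildren G v \ I) < g := by
    rw [card_sdiff_of_subset hI]
    omega
  obtain ⟨r, hr, hrr, hrI, hcard⟩ := hfull v I hI many missing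
  exact ⟨r, hr, hrr, by simpa only [group, hrr] using hrI, by simpa only [group, hrr] using hcard⟩

end Groups

/-- The color count at a vertex with `k₁` top children, `k₂` side children and `o` parents, when `n`
colors are available in all: `m` bounds the number of colors kept away from the top edges, and the
last clause says that a set of `i` side children violating Hall's condition is almost everything. -/
theorem exists_threshold {n Δ g o k₁ k₂ : ℕ} (hn : n + g = 5 * Δ + 1) (hg : 4 * g ^ 2 < Δ)
    (ho : o ≤ 2) (hk : k₁ + k₂ + o ≤ Δ) :
    ∃ K m, K + 3 * g + o ≤ Δ + 2 ∧ m = o * (Δ + 2) + k₂ + (g + 1) * (k₁ - K) ∧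
      m + k₁ + k₂ + 2 ≤ n ∧ m + k₁ + k₂ + (Δ + 2) ≤ n + g + 1 ∧
      ∀ i ≤ k₂, n + 1 < m + k₁ + (Δ + 2) + i → k₂ < i + g ∧ Δ ≤ i + g + 1 := by
  have hΔ : 3 * g ^ 2 + 2 * g ≤ Δ := by nlinarith [sq_nonneg (g - 1 : ℤ)]
  have large : 3 * g ≤ Δ := by nlinarith [sq_nonneg (g - 1 : ℤ)]
  have hoΔ : o * (Δ + 2) ≤ 2 * o + 2 * Δ := by nlinarith
  refine ⟨Δ + 2 - (3 * g + o), _, by omega, rfl, ?_⟩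
  set K := Δ + 2 - (3 * g + o)
  obtain hKk | hKk := le_or_gt k₁ K
  · rw [Nat.sub_eq_zero_of_le hKk, mul_zero]
    exact ⟨by omega, by omega, fun i _ => by omega⟩
  · suffices h : o * (Δ + 2) + k₂ + (g + 1) * (k₁ - K) + k₁ + k₂ + Δ + 1 ≤ n by
      exact ⟨by omega, by omega, fun i hi => by omega⟩
    have few : k₁ - K + k₂ + 2 ≤ 3 * g := by omega
    have : k₂ + (g + 1) * (k₁ - K) + 2 * (g + 1) ≤ 3 * g ^ 2 + 3 * g :=
      calc k₂ + (g + 1) * (k₁ - K) + 2 * (g + 1)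
          ≤ (g + 1) * (k₁ - K + k₂ + 2) := by nlinarith
        _ ≤ (g + 1) * (3 * g) := by gcongr
        _ = 3 * g ^ 2 + 3 * g := by ring
    omega

/-- A coloring of the edges of a graph on `V` under construction: `color y v` is the color of the
edge from `y` to its parent `v`, and `palette v` is a set of colors reserved for the edges from the
children of `v`, including two spare ones. Both are junk until `v` has been processed. -/
structure PaletteColoring (V C : Type*) where
  color : V → V → C
  palette : V → Finset C

namespace PaletteColoring

section Extend

variable {V C : Type*} [DecidableEq V]

/-- The coloring in which the edge from each child `y` of `v` has been given the color `ψ y`, and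
`v` the palette `Q`. -/
def extend (S : PaletteColoring V C) (v : V) (ψ : V → C) (Q : Finset C) : PaletteColoring V C where
  color y := Function.update (S.color y) v (ψ y)
  palette := Function.update S.palette v Q

variable {S : PaletteColoring V C} {v w y : V} {ψ : V → C} {Q : Finset C}

theorem extend_color_self : (S.extend v ψ Q).color y v = ψ y := Function.update_self ..

theorem extend_color_of_ne (h : w ≠ v) : (S.extend v ψ Q).color y w = S.color y w :=
  Function.update_of_ne h ..

theorem extend_palette_self : (S.extend v ψ Q).palette v = Q := Function.update_self ..

theorem extend_palette_of_ne (h : w ≠ v) : (S.extend v ψ Q).palette w = S.palette w :=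
  Function.update_of_ne h ..

end Extend

section Definitions

variable {V C : Type*} [Fintype V] [LinearOrder V] [DecidableEq C] (S : PaletteColoring V C)
  (G : SimpleGraph V) [DecidableRel G.Adj]

/-- The colors of the edges from `v` to its parents. -/
def parentColors (v : V) : Finset C := (parents G v).image (S.color v)

/-- The colors that may not be used on an edge that is joined to `v`. -/
def blocked (v : V) : Finset C := S.palette v ∪ S.parentColors G v

/-- The color of the top edge of `y`. -/
def topColor (y : V) : C := S.color y (topParent G y)

/-- The colors that may not occur in the palette of `v`. -/
def forbidden (v : V) : Finset C :=
  (parents G v).biUnion (S.blocked G) ∪ (sideChildren G v).image (S.topColor G)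

/-- The colors of those top edges of the group of `y` at `v` that are colored before that of `y`. -/
def seniorColors (lead : V → V → V) (v y : V) : Finset C :=
  {z ∈ group G lead v y | topParent G y < topParent G z}.image (S.topColor G)

/-- The conditions on the colors of the edges to the vertices of `P` that make the coloring
strong. -/
structure IsProperOn (P : Set V) : Prop where
  card_palette : ∀ {v}, v ∈ P → #(S.palette v) = #(children G v) + 2
  color_mem_palette : ∀ {v y}, v ∈ P → v ∈ parents G y → S.color y v ∈ S.palette v
  injOn_color : ∀ {v}, v ∈ P → Set.InjOn (S.color · v) (children G v)
  disjoint_palette_blocked : ∀ {v u}, v ∈ P → u ∈ parents G v →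
    Disjoint (S.palette v) (S.blocked G u)
  color_notMem_blocked : ∀ {v y}, v ∈ P → y ∈ sideChildren G v →
    S.color y v ∉ S.blocked G (topParent G y)
  topColor_notMem_blocked : ∀ {v y}, v ∈ P → y ∈ sideChildren G v →
    S.topColor G y ∉ S.blocked G v

/-- The top edges of the side children of `v` that lead to `P` are colored so as to leave enough
colors for the edges to `v` itself. -/
def IsSecuredAt (g : ℕ) (lead : V → V → V) (v : V) (P : Set V) : Prop :=
  ∀ ⦃y⦄, y ∈ sideChildren G v → topParent G y ∈ P →
    Secured g (G.maxDegree + 2) (S.blocked G (topParent G (lead v y)))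
      (S.blocked G (topParent G y)) (S.seniorColors G lead v y) (S.topColor G y)

end Definitions

variable {V C : Type*} [Fintype V] [LinearOrder V] [DecidableEq C] {S S' : PaletteColoring V C}
  {G : SimpleGraph V} [DecidableRel G.Adj] {g : ℕ} {lead : V → V → V} {P : Set V} {u v w y : V}

theorem blocked_congr (hp : S'.palette w = S.palette w)
    (hc : ∀ u ∈ parents G w, S'.color w u = S.color w u) : S'.blocked G w = S.blocked G w := by
  rw [blocked, blocked, parentColors, parentColors, hp, image_congr hc]

theorem seniorColors_congr
    (h : ∀ z ∈ sideChildren G v, topParent G y < topParent G z → S'.topColor G z = S.topColor G z) :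
    S'.seniorColors G lead v y = S.seniorColors G lead v y := by
  refine image_congr fun z hz => ?_
  obtain ⟨hzg, hlt⟩ := mem_filter.1 hz
  exact h z (mem_filter.1 hzg).1 hlt

theorem IsSecuredAt.congr (h : S.IsSecuredAt G g lead v P) (hlead : IsLeader G g lead)
    (hP : IsUpperSet P) (hblocked : ∀ w ∈ P, S'.blocked G w = S.blocked G w)
    (htop : ∀ y ∈ sideChildren G v, topParent G y ∈ P → S'.topColor G y = S.topColor G y) :
    S'.IsSecuredAt G g lead v P := by
  intro y hy hyP
  rw [hblocked _ hyP, hblocked _ (hP (hlead.topParent_le hy) hyP), htop y hy hyP,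
    seniorColors_congr fun z hz hlt => htop z hz (hP hlt.le hyP)]
  exact h hy hyP

theorem seniorColors_eq_empty (hlead : IsLeader G g lead)
    (h : topParent G (lead v y) ≤ topParent G y) : S.seniorColors G lead v y = ∅ := by
  rw [seniorColors, image_eq_empty, filter_eq_empty_iff]
  intro z hz
  obtain ⟨hz, hzy⟩ := mem_filter.1 hz
  exact ((hlead.topParent_le hz).trans (hzy ▸ h)).not_gt

theorem card_seniorColors_le (hlead : IsLeader G g lead) (hy : y ∈ sideChildren G v) :
    #(S.seniorColors G lead v y) ≤ g := by
  have mem_self : y ∈ group G lead v y := mem_filter.2 ⟨hy, rfl⟩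
  have : #{z ∈ group G lead v y | topParent G y < topParent G z} < #(group G lead v y) :=
    card_lt_card (filter_ssubset.2 ⟨y, mem_self, lt_irrefl _⟩)
  exact Nat.lt_succ_iff.1 (card_image_le.trans_lt (this.trans_le (hlead.card_group_le hy)))

theorem IsProperOn.card_blocked_le (hS : S.IsProperOn G P) (hv : v ∈ P) :
    #(S.blocked G v) ≤ G.maxDegree + 2 := by
  have := hS.card_palette hv
  have := card_children_add_card_parents_le (G := G) v
  have := card_union_le (S.palette v) (S.parentColors G v)
  have : #(S.parentColors G v) ≤ #(parents G v) := card_image_le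
  rw [blocked]
  omega

theorem IsProperOn.of_color_eq (hG : ∀ v, #(parents G v) ≤ 2) (hS : S.IsProperOn G (Set.Ioi v))
    (hpalette : S'.palette = S.palette) (hcolor : ∀ y ∉ sideChildren G v, S'.color y = S.color y)
    (hmem : ∀ w, v < w → Set.MapsTo (S'.color · w) (children G w) (S.palette w))
    (hinj : ∀ w, v < w → Set.InjOn (S'.color · w) (children G w)) :
    S'.IsProperOn G (Set.Ioi v) := by
  have blocked_eq : ∀ w, v < w → S'.blocked G w = S.blocked G w := fun w hw =>
    blocked_congr (congrFun hpalette w) fun u _ =>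
      congrFun (hcolor w (notMem_sideChildren_of_le hw.le)) u
  have color_eq : ∀ {w y}, v < w → y ∈ sideChildren G w → S'.color y = S.color y :=
    fun hw hy => hcolor _ fun h => hw.ne (eq_of_mem_sideChildren (hG _) h hy)
  refine ⟨fun hw => hpalette ▸ hS.card_palette hw, fun hw hy => ?_, fun hw => hinj _ hw,
    fun {w u} hw hu => ?_, fun {w y} hw hy => ?_, fun {w y} hw hy => ?_⟩
  · exact hpalette ▸ hmem _ hw (mem_children.2 hy)
  · rw [hpalette, blocked_eq u (lt_trans hw (lt_of_mem_parents hu))]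
    exact hS.disjoint_palette_blocked hw hu
  · rw [blocked_eq _ (lt_trans hw (lt_topParent hy)), color_eq hw hy]
    exact hS.color_notMem_blocked hw hy
  · rw [blocked_eq w hw, topColor, color_eq hw hy]
    exact hS.topColor_notMem_blocked hw hy

theorem exists_recolor [Nonempty C] (hG : ∀ v, #(parents G v) ≤ 2)
    (hS : S.IsProperOn G (Set.Ioi v)) :
    ∃ S' : PaletteColoring V C, S'.IsProperOn G (Set.Ioi v) ∧ S'.palette = S.palette ∧
      (∀ y ∉ sideChildren G v, S'.color y = S.color y) ∧
      ∀ y ∈ sideChildren G v, S'.topColor G y ∉ S.parentColors G v ∧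
        (S.topColor G y ∉ S.parentColors G v → S'.topColor G y = S.topColor G y) := by
  have recolor : ∀ w, ∃ f : V → C,
      (∀ y ∉ {y ∈ sideChildren G v | topParent G y = w}, f y = S.color y w) ∧
      (v < w → Set.InjOn f (children G w) ∧ Set.MapsTo f (children G w) (S.palette w) ∧
        ∀ y ∈ {y ∈ sideChildren G v | topParent G y = w}, f y ∉ S.parentColors G v ∧
          (S.color y w ∉ S.parentColors G v → f y = S.color y w)) := fun w => by
    by_cases hw : v < w
    · have card_parentColors : #(S.parentColors G v) ≤ 2 := card_image_le.trans (hG v)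
      obtain ⟨f, hinj, hmem, hf, hf'⟩ := exists_injOn_recolor (f := (S.color · w))
        (r := {y ∈ sideChildren G v | topParent G y = w}) (o := S.parentColors G v)
        (fun y hy => by
          obtain ⟨hyv, rfl⟩ := mem_filter.1 hy
          exact mem_children.2 (topParent_mem_parents (mem_sideChildren.1 hyv).1))
        (hS.injOn_color hw) (fun y hy => hS.color_mem_palette hw (mem_children.1 hy))
        (by rw [hS.card_palette hw]; omega)
      exact ⟨f, hf, fun _ => ⟨hinj, hmem, hf'⟩⟩
    · exact ⟨(S.color · w), fun _ _ => rfl, fun h => absurd h hw⟩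
  choose f hf hfw using recolor
  have color_eq : ∀ y ∉ sideChildren G v, (fun w => f w y) = S.color y := fun y hy =>
    funext fun w => hf w y fun h => hy (mem_filter.1 h).1
  refine ⟨⟨fun y w => f w y, S.palette⟩, hS.of_color_eq hG rfl color_eq
    (fun w hw => (hfw w hw).2.1) (fun w hw => (hfw w hw).1), rfl, color_eq, fun y hy => ?_⟩
  exact (hfw _ (lt_topParent hy)).2.2 y (mem_filter.2 ⟨hy, rfl⟩)

theorem IsProperOn.card_forbidden_le (hS : S.IsProperOn G (Set.Ioi v)) :
    #(S.forbidden G v) ≤ #(parents G v) * (G.maxDegree + 2) + #(sideChildren G v) :=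
  (card_union_le _ _).trans <| Nat.add_le_add
    (card_biUnion_le_card_mul _ _ _ fun _ hu => hS.card_blocked_le (lt_of_mem_parents hu))
    card_image_le

theorem topColor_mem_forbidden (hy : y ∈ sideChildren G v) : S.topColor G y ∈ S.forbidden G v :=
  mem_union_right _ (mem_image_of_mem _ hy)

theorem IsProperOn.not_disjoint_forbidden_blocked (hS : S.IsProperOn G (Set.Ioi v))
    (hy : y ∈ sideChildren G v) :
    ¬Disjoint (S.forbidden G v) (S.blocked G (topParent G y)) :=
  not_disjoint_iff.2 ⟨_, topColor_mem_forbidden hy, mem_union_left _ <|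
    hS.color_mem_palette (lt_topParent hy) (topParent_mem_parents (mem_sideChildren.1 hy).1)⟩

theorem exists_injOn_topChildren [Fintype C] [Nonempty C] (hG : ∀ v, #(parents G v) ≤ 2)
    (hlead : IsLeader G g lead) (S : PaletteColoring V C) (v : V) (Φ O : Finset C) {K : ℕ}
    (hK : K + 3 * g + #O ≤ G.maxDegree + 2) (hO : 2 * g + #O < G.maxDegree + 2)
    (hcard : #Φ + (g + 1) * (#(topChildren G v) - K) + #(topChildren G v) ≤ Fintype.card C) :
    ∃ (ψ : V → C) (F : Finset C), Φ ⊆ F ∧ #F ≤ #Φ + (g + 1) * (#(topChildren G v) - K) ∧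
      Set.InjOn ψ (topChildren G v) ∧ (∀ y ∈ topChildren G v, ψ y ∉ F) ∧
      ∀ y ∈ topChildren G v, ∀ w, y ∈ sideChildren G w → ∀ P, Disjoint P F →
        Secured g (G.maxDegree + 2) (S.blocked G (topParent G (lead w y))) (P ∪ O)
          (S.seniorColors G lead w y) (ψ y) := by
  have choose_sets : ∀ y, ∃ A E : Finset C, #E ≤ g ∧ ∀ w, y ∈ sideChildren G w →
      S.blocked G (topParent G (lead w y)) = A ∧ S.seniorColors G lead w y = E := fun y => by
    by_cases hy : ∃ w, y ∈ sideChildren G w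
    · obtain ⟨w, hw⟩ := hy
      refine ⟨S.blocked G (topParent G (lead w y)), S.seniorColors G lead w y,
        card_seniorColors_le hlead hw, fun w' hw' => ?_⟩
      rw [eq_of_mem_sideChildren (hG y) hw' hw]
      exact ⟨rfl, rfl⟩
    · exact ⟨∅, ∅, by simp only [card_empty, zero_le], fun w hw => absurd ⟨w, hw⟩ hy⟩
  choose A E hE hAE using choose_sets
  obtain ⟨ψ, F, hΦF, hF, hinj, hψ⟩ :=
    exists_injOn_secured (topChildren G v) Φ O A E (fun y _ => hE y) hK hO hcard
  refine ⟨ψ, F, hΦF, hF, hinj, fun y hy => (hψ y hy).1, fun y hy w hw => ?_⟩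
  rw [(hAE y w hw).1, (hAE y w hw).2]
  exact (hψ y hy).2

theorem IsProperOn.injOn_topParent_topColor (hS : S.IsProperOn G (Set.Ioi v)) :
    Set.InjOn (fun y => (topParent G y, S.topColor G y)) (sideChildren G v) := by
  intro y hy z hz hyz
  obtain ⟨hp, hc⟩ := Prod.ext_iff.1 hyz
  have mem_children_topParent : ∀ {x}, x ∈ sideChildren G v → x ∈ children G (topParent G x) :=
    fun hx => mem_children.2 (topParent_mem_parents (mem_sideChildren.1 hx).1)
  dsimp only at hp
  simp only [topColor, hp] at hc
  exact hS.injOn_color (lt_topParent hz) (hp ▸ mem_children_topParent hy)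
    (mem_children_topParent hz) hc

theorem exists_injOn_sideChildren [Fintype C] [Nonempty C] (hlead : IsLeader G g lead)
    (hS : S.IsProperOn G (Set.Ioi v)) (hsec : S.IsSecuredAt G g lead v (Set.Ioi v)) {F : Finset C}
    (hF : #F + #(sideChildren G v) + (G.maxDegree + 2) ≤ Fintype.card C + g + 1)
    (hFblocked : ∀ y ∈ sideChildren G v, ¬Disjoint F (S.blocked G (topParent G y)))
    (htop : ∀ y ∈ sideChildren G v, S.topColor G y ∈ F)
    (hlarge : ∀ i ≤ #(sideChildren G v), Fintype.card C + 1 < #F + (G.maxDegree + 2) + i →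
      #(sideChildren G v) < i + g ∧ G.maxDegree ≤ i + g + 1) :
    ∃ ψ : V → C, Set.InjOn ψ (sideChildren G v) ∧
      ∀ y ∈ sideChildren G v, ψ y ∉ F ∪ S.blocked G (topParent G y) := by
  refine exists_injOn_notMem_of_secured hF (fun y hy => hS.card_blocked_le (lt_topParent hy))
    hFblocked htop hS.injOn_topParent_topColor fun I hI hIcard => ?_
  obtain ⟨hIside, hIΔ⟩ := hlarge _ (card_le_card hI) hIcard
  obtain ⟨r, hr, hrr, hrI, hcard⟩ := hlead.exists_full_group hI hIside hIΔ
  refine ⟨_, hrI, r, mem_filter.2 ⟨hI hr, rfl⟩, by omega, fun y hy => ?_⟩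
  obtain ⟨hyv, hyr⟩ := mem_filter.1 hy
  have hgroup : group G lead v y = group G lead v r := by rw [group, group, hyr]
  have := hsec hyv (lt_topParent hyv)
  rwa [hyr, hrr, seniorColors, hgroup] at this

theorem exists_childColors [Fintype C] [Nonempty C] (hG : ∀ v, #(parents G v) ≤ 2)
    (hlead : IsLeader G g lead) (hg : 4 * g ^ 2 < G.maxDegree)
    (hC : Fintype.card C + g = 5 * G.maxDegree + 1)
    (hS : S.IsProperOn G (Set.Ioi v)) (hsec : S.IsSecuredAt G g lead v (Set.Ioi v))
    (hS' : S'.IsProperOn G (Set.Ioi v)) (hblocked : ∀ w, v < w → S'.blocked G w = S.blocked G w)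
    (htop : ∀ y ∈ sideChildren G v, S.topColor G y ∈ S'.forbidden G v) :
    ∃ (ψ : V → C) (F : Finset C), S'.forbidden G v ⊆ F ∧
      #F + #(children G v) + 2 ≤ Fintype.card C ∧
      Set.InjOn ψ (children G v) ∧ (∀ y ∈ children G v, ψ y ∉ F) ∧
      (∀ y ∈ sideChildren G v, ψ y ∉ S'.blocked G (topParent G y)) ∧
      ∀ y ∈ topChildren G v, ∀ w, y ∈ sideChildren G w → ∀ P, Disjoint P F →
        Secured g (G.maxDegree + 2) (S'.blocked G (topParent G (lead w y)))
          (P ∪ S'.parentColors G v) (S'.seniorColors G lead w y) (ψ y) := by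
  have card_children : #(children G v) = #(topChildren G v) + #(sideChildren G v) := by
    rw [← topChildren_union_sideChildren,
      card_union_of_disjoint (disjoint_topChildren_sideChildren v)]
  have card_parentColors : #(S'.parentColors G v) ≤ #(parents G v) := card_image_le
  have card_forbidden := hS'.card_forbidden_le
  obtain ⟨K, m, hK, hm, hpalette, hside, hlarge⟩ :=
    exists_threshold hC hg (hG v) (card_children ▸ card_children_add_card_parents_le v)
  obtain ⟨ψ₁, F, hΦF, hF, hinj₁, hψ₁, hsec₁⟩ :=
    exists_injOn_topChildren hG hlead S' v (S'.forbidden G v) (S'.parentColors G v) (K := K)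
      (by omega) (by nlinarith [hG v]) (by omega)
  have card_F' : #(F ∪ (topChildren G v).image ψ₁) ≤ m + #(topChildren G v) :=
    (card_union_le _ _).trans (Nat.add_le_add (by omega) card_image_le)
  obtain ⟨ψ₂, hinj₂, hψ₂⟩ := exists_injOn_sideChildren hlead hS hsec
    (F := F ∪ (topChildren G v).image ψ₁) (by omega)
    (fun y hy h => hS'.not_disjoint_forbidden_blocked hy <|
      hblocked _ (lt_topParent hy) ▸ h.mono_left (hΦF.trans subset_union_left))
    (fun y hy => mem_union_left _ (hΦF (htop y hy))) (fun i hi h => hlarge i hi (by omega))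
  simp only [mem_union, mem_image, not_or, not_exists, not_and] at hψ₂
  have notMem_side : ∀ y ∈ topChildren G v, y ∉ sideChildren G v := fun y hy =>
    disjoint_left.1 (disjoint_topChildren_sideChildren v) hy
  set ψ : V → C := fun y => if y ∈ sideChildren G v then ψ₂ y else ψ₁ y
  have eq₁ : ∀ y ∈ topChildren G v, ψ y = ψ₁ y := fun y hy => if_neg (notMem_side y hy)
  have eq₂ : ∀ y ∈ sideChildren G v, ψ y = ψ₂ y := fun y hy => if_pos hy
  refine ⟨ψ, F, hΦF, by omega, ?_, ?_, fun y hy => ?_, fun y hy => eq₁ y hy ▸ hsec₁ y hy⟩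
  · rw [← topChildren_union_sideChildren, coe_union,
      Set.injOn_union (disjoint_coe.2 (disjoint_topChildren_sideChildren v))]
    refine ⟨hinj₁.congr fun y hy => (eq₁ y hy).symm, hinj₂.congr fun y hy => (eq₂ y hy).symm,
      fun y hy z hz => ?_⟩
    rw [eq₁ y hy, eq₂ z hz]
    exact (hψ₂ z hz).1.2 y hy
  · rw [← topChildren_union_sideChildren, forall_mem_union]
    exact ⟨fun y hy => eq₁ y hy ▸ hψ₁ y hy, fun y hy => eq₂ y hy ▸ (hψ₂ y hy).1.1⟩
  · rw [eq₂ y hy, hblocked _ (lt_topParent hy)]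
    exact (hψ₂ y hy).2

variable {ψ : V → C} {Q : Finset C}

theorem blocked_extend_of_lt (h : v < w) : (S.extend v ψ Q).blocked G w = S.blocked G w :=
  blocked_congr (extend_palette_of_ne h.ne') fun _ hu =>
    extend_color_of_ne (h.trans (lt_of_mem_parents hu)).ne'

theorem blocked_extend_self : (S.extend v ψ Q).blocked G v = Q ∪ S.parentColors G v := by
  rw [blocked, extend_palette_self, parentColors, parentColors,
    image_congr fun u hu => extend_color_of_ne (lt_of_mem_parents hu).ne']

theorem IsProperOn.extend (hS : S.IsProperOn G (Set.Ioi v))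
    (htop : ∀ y ∈ sideChildren G v, S.topColor G y ∉ S.parentColors G v)
    (hQ : #Q = #(children G v) + 2) (hdisj : Disjoint Q (S.forbidden G v))
    (hmem : ∀ y ∈ children G v, ψ y ∈ Q) (hinj : Set.InjOn ψ (children G v))
    (hside : ∀ y ∈ sideChildren G v, ψ y ∉ S.blocked G (topParent G y)) :
    (S.extend v ψ Q).IsProperOn G (Set.Ici v) where
  card_palette {w} hw := by
    obtain rfl | hw := (Set.mem_Ici.1 hw).eq_or_lt
    · rwa [extend_palette_self]
    · rw [extend_palette_of_ne hw.ne']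
      exact hS.card_palette hw
  color_mem_palette {w y} hw hy := by
    obtain rfl | hw := (Set.mem_Ici.1 hw).eq_or_lt
    · rw [extend_palette_self, extend_color_self]
      exact hmem y (mem_children.2 hy)
    · rw [extend_palette_of_ne hw.ne', extend_color_of_ne hw.ne']
      exact hS.color_mem_palette hw hy
  injOn_color {w} hw := by
    obtain rfl | hw := (Set.mem_Ici.1 hw).eq_or_lt
    · simpa only [extend_color_self] using hinj
    · simpa only [extend_color_of_ne hw.ne'] using hS.injOn_color hw
  disjoint_palette_blocked {w u} hw hu := by
    rw [blocked_extend_of_lt (lt_of_le_of_lt hw (lt_of_mem_parents hu))]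
    obtain rfl | hw := (Set.mem_Ici.1 hw).eq_or_lt
    · rw [extend_palette_self]
      exact hdisj.mono_right ((subset_biUnion_of_mem _ hu).trans subset_union_left)
    · rw [extend_palette_of_ne hw.ne']
      exact hS.disjoint_palette_blocked hw hu
  color_notMem_blocked {w y} hw hy := by
    rw [blocked_extend_of_lt (lt_of_le_of_lt hw (lt_topParent hy))]
    obtain rfl | hw := (Set.mem_Ici.1 hw).eq_or_lt
    · rw [extend_color_self]
      exact hside y hy
    · rw [extend_color_of_ne hw.ne']
      exact hS.color_notMem_blocked hw hy
  topColor_notMem_blocked {w y} hw hy := by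
    rw [topColor, extend_color_of_ne (lt_of_le_of_lt hw (lt_topParent hy)).ne']
    obtain rfl | hw := (Set.mem_Ici.1 hw).eq_or_lt
    · rw [blocked_extend_self, notMem_union]
      exact ⟨fun h => disjoint_left.1 hdisj h (topColor_mem_forbidden hy), htop y hy⟩
    · rw [blocked_extend_of_lt hw]
      exact hS.topColor_notMem_blocked hw hy

theorem IsSecuredAt.extend (hlead : IsLeader G g lead)
    (hsec : S.IsSecuredAt G g lead w (Set.Ioi v)) (hmem : ∀ y ∈ topChildren G v, ψ y ∈ Q)
    (hψ : ∀ y ∈ topChildren G v, y ∈ sideChildren G w →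
      Secured g (G.maxDegree + 2) (S.blocked G (topParent G (lead w y)))
        (Q ∪ S.parentColors G v) (S.seniorColors G lead w y) (ψ y)) :
    (S.extend v ψ Q).IsSecuredAt G g lead w (Set.Ici v) := by
  intro y hy hvy
  have senior_eq : (S.extend v ψ Q).seniorColors G lead w y = S.seniorColors G lead w y :=
    seniorColors_congr fun z _ hz => extend_color_of_ne (lt_of_le_of_lt hvy hz).ne'
  obtain rfl | hvy := (Set.mem_Ici.1 hvy).eq_or_lt
  · have hy' := mem_topChildren_topParent hy
    rw [topColor, extend_color_self, blocked_extend_self]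
    obtain heq | hlt := (hlead.topParent_le hy).eq_or_lt
    · refine Or.inr (Or.inr ?_)
      rw [seniorColors_eq_empty hlead heq.ge, sdiff_empty, ← heq, blocked_extend_self]
      exact mem_union_left _ (hmem y hy')
    · rw [blocked_extend_of_lt hlt, senior_eq]
      exact hψ y hy' hy
  · rw [senior_eq, blocked_extend_of_lt hvy, topColor, extend_color_of_ne hvy.ne',
      blocked_extend_of_lt (hvy.trans_le (hlead.topParent_le hy))]
    exact hsec hy hvy

theorem exists_isProperOn_Ici [Fintype C] [Nonempty C] (hG : ∀ v, #(parents G v) ≤ 2)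
    (hlead : IsLeader G g lead) (hg : 4 * g ^ 2 < G.maxDegree)
    (hC : Fintype.card C + g = 5 * G.maxDegree + 1) (hS : S.IsProperOn G (Set.Ioi v))
    (hsec : ∀ w ≤ v, S.IsSecuredAt G g lead w (Set.Ioi v)) :
    ∃ S' : PaletteColoring V C, S'.IsProperOn G (Set.Ici v) ∧
      ∀ w < v, S'.IsSecuredAt G g lead w (Set.Ici v) := by
  obtain ⟨S₁, hS₁, hpalette, hcolor, htop⟩ := exists_recolor hG hS
  have color_eq : ∀ w, v ≤ w → S₁.color w = S.color w := fun w hw =>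
    hcolor w (notMem_sideChildren_of_le hw)
  have blocked_eq : ∀ w, v < w → S₁.blocked G w = S.blocked G w := fun w hw =>
    blocked_congr (congrFun hpalette w) fun u _ => congrFun (color_eq w hw.le) u
  have parentColors_eq : S₁.parentColors G v = S.parentColors G v :=
    congrArg (image · _) (color_eq v le_rfl)
  have topColor_mem : ∀ y ∈ sideChildren G v, S.topColor G y ∈ S₁.forbidden G v := fun y hy => by
    by_cases h : S.topColor G y ∈ S.parentColors G v
    · obtain ⟨u, hu, hyu⟩ := mem_image.1 h
      refine mem_union_left _ (mem_biUnion.2 ⟨u, hu, mem_union_left _ ?_⟩)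
      rw [hpalette, ← hyu]
      exact hS.color_mem_palette (lt_of_mem_parents hu) hu
    · rw [← (htop y hy).2 h]
      exact topColor_mem_forbidden hy
  obtain ⟨ψ, F, hΦF, hcard, hinj, hψF, hψside, hψsec⟩ := exists_childColors hG hlead hg hC hS
    (hsec v le_rfl) hS₁ blocked_eq topColor_mem
  obtain ⟨Q, hψQ, hQF, hQ⟩ : ∃ Q, (children G v).image ψ ⊆ Q ∧ Q ⊆ Fᶜ ∧
      #Q = #(children G v) + 2 := by
    refine exists_subsuperset_card_eq (image_subset_iff.2 fun y hy => mem_compl.2 (hψF y hy))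
      (card_image_le.trans (Nat.le_add_right _ _)) ?_
    rw [card_compl]
    omega
  have hQ_disjoint : Disjoint Q F := disjoint_left.2 fun c hc => mem_compl.1 (hQF hc)
  have mem_Q : ∀ y ∈ children G v, ψ y ∈ Q := fun y hy => hψQ (mem_image_of_mem ψ hy)
  refine ⟨S₁.extend v ψ Q, hS₁.extend (fun y hy => parentColors_eq ▸ (htop y hy).1) hQ
    (hQ_disjoint.mono_right hΦF) mem_Q hinj hψside, fun w hw => ?_⟩
  refine IsSecuredAt.extend hlead ((hsec w hw.le).congr hlead (isUpperSet_Ioi v) blocked_eq ?_)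
    (fun y hy => mem_Q y (mem_filter.1 hy).1) fun y hy hyw => hψsec y hy w hyw Q hQ_disjoint
  exact fun y hy _ => congrFun (hcolor y fun hyv => hw.ne (eq_of_mem_sideChildren (hG y) hy hyv)) _

theorem exists_isProperOn_univ [Fintype C] (hG : ∀ v, #(parents G v) ≤ 2)
    (hg : 4 * g ^ 2 < G.maxDegree) (hC : Fintype.card C + g = 5 * G.maxDegree + 1) :
    ∃ S : PaletteColoring V C, S.IsProperOn G Set.univ := by
  have : Nonempty C := Fintype.card_pos_iff.1 (by nlinarith)
  obtain ⟨lead, hlead⟩ := exists_isLeader hg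
  suffices h : ∀ s : Finset V, IsUpperSet (s : Set V) → ∃ S : PaletteColoring V C,
      S.IsProperOn G s ∧ ∀ w ∉ s, S.IsSecuredAt G g lead w s by
    obtain ⟨S, hS, -⟩ := h univ (by simpa only [coe_univ] using isUpperSet_univ)
    exact ⟨S, by simpa only [coe_univ] using hS⟩
  intro s
  induction s using Finset.induction_on_min with
  | empty =>
    refine fun _ => ⟨⟨fun _ _ => Classical.arbitrary C, fun _ => ∅⟩, ?_, ?_⟩
    · constructor <;> simp
    · intro _ _ _ _
      simp
  | insert v s hv ih =>
    intro hupper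
    have eq_Ioi : (s : Set V) = Set.Ioi v := by
      ext u
      refine ⟨hv u, fun hu => ?_⟩
      exact (mem_insert.1 (hupper (le_of_lt hu) (mem_insert_self v s))).resolve_left hu.ne'
    obtain ⟨S, hS, hsec⟩ := ih (eq_Ioi ▸ isUpperSet_Ioi v)
    rw [eq_Ioi] at hS hsec
    rw [coe_insert, eq_Ioi, Set.Ioi_insert]
    refine (exists_isProperOn_Ici hG hlead hg hC hS fun w hw => hsec w fun h =>
      (hv w h).not_ge hw).imp fun S' hS' => ⟨hS'.1, fun w hw => hS'.2 w ?_⟩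
    have : w ∉ Set.Ici v := by rwa [← Set.Ioi_insert, ← eq_Ioi, ← coe_insert]
    exact not_le.1 this

theorem IsProperOn.color_mem_blocked {x : V} (hS : S.IsProperOn G Set.univ)
    (hw : w ∈ parents G u) (hx : x ∈ s(u, w)) : S.color u w ∈ S.blocked G x := by
  obtain rfl | rfl := Sym2.mem_iff.1 hx
  · exact mem_union_right _ (mem_image_of_mem _ hw)
  · exact mem_union_left _ (hS.color_mem_palette trivial hw)

theorem IsProperOn.color_notMem_blocked_of_ne (hS : S.IsProperOn G Set.univ)
    (hv : v ∈ parents G y) (hw : w ∈ parents G y) (hG : #(parents G y) ≤ 2) (hvw : v ≠ w) :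
    S.color y v ∉ S.blocked G w := by
  by_cases hy : topParent G y = w
  · have hyv : y ∈ sideChildren G v := mem_sideChildren.2 ⟨hv, fun h => hvw (h.symm.trans hy)⟩
    exact hy ▸ hS.color_notMem_blocked trivial hyv
  · have hyw : y ∈ sideChildren G w := mem_sideChildren.2 ⟨hw, hy⟩
    have : topParent G y = v := by
      by_contra h
      exact hvw (eq_of_mem_sideChildren hG (mem_sideChildren.2 ⟨hv, h⟩) hyw)
    exact this ▸ hS.topColor_notMem_blocked trivial hyw

variable {u' w' x x' : V}

theorem IsProperOn.eq_of_color_eq_of_mem (hS : S.IsProperOn G Set.univ)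
    (hG : ∀ v, #(parents G v) ≤ 2) (hw : w ∈ parents G u) (hw' : w' ∈ parents G u')
    (hc : S.color u w = S.color u' w') (hx : x ∈ s(u, w)) (hx' : x ∈ s(u', w')) :
    s(u, w) = s(u', w') := by
  obtain rfl | rfl := Sym2.mem_iff.1 hx <;> obtain rfl | rfl := Sym2.mem_iff.1 hx'
  · by_contra hne
    refine hS.color_notMem_blocked_of_ne hw hw' (hG _) (fun h => hne (h ▸ rfl)) ?_
    exact hc ▸ hS.color_mem_blocked hw' (Sym2.mem_mk_right _ _)
  · exact absurd (hS.color_mem_blocked hw (Sym2.mem_mk_right _ _)) <|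
      disjoint_left.1 (hS.disjoint_palette_blocked trivial hw)
        (hc ▸ hS.color_mem_palette trivial hw')
  · exact absurd (hS.color_mem_blocked hw' (Sym2.mem_mk_right _ _)) <|
      disjoint_left.1 (hS.disjoint_palette_blocked trivial hw')
        (hc ▸ hS.color_mem_palette trivial hw)
  · rw [hS.injOn_color trivial (mem_children.2 hw) (mem_children.2 hw') hc]

theorem IsProperOn.eq_of_color_eq_of_parent (hS : S.IsProperOn G Set.univ)
    (hG : ∀ v, #(parents G v) ≤ 2) (hw : w ∈ parents G u) (hw' : w' ∈ parents G u')
    (hc : S.color u w = S.color u' w') (hx : x ∈ s(u, w)) (hx' : x' ∈ s(u', w'))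
    (hxx' : x' ∈ parents G x) : s(u, w) = s(u', w') := by
  have hblocked : S.color u w ∈ S.blocked G x' := hc ▸ hS.color_mem_blocked hw' hx'
  obtain rfl | rfl := Sym2.mem_iff.1 hx
  · obtain rfl | hne := eq_or_ne w x'
    · exact hS.eq_of_color_eq_of_mem hG hw hw' hc (Sym2.mem_mk_right _ _) hx'
    · exact absurd hblocked (hS.color_notMem_blocked_of_ne hw hxx' (hG _) hne)
  · exact absurd hblocked <| disjoint_left.1 (hS.disjoint_palette_blocked trivial hxx')
      (hS.color_mem_palette trivial hw)

theorem IsProperOn.isStrongEdgeColoring {n : ℕ} {S : PaletteColoring V (Fin n)}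
    (hS : S.IsProperOn G Set.univ) (hG : ∀ v, #(parents G v) ≤ 2) :
    G.IsStrongEdgeColoring fun e => S.color (e : Sym2 V).inf (e : Sym2 V).sup := by
  have mk_inf_sup : ∀ e : Sym2 V, s(e.inf, e.sup) = e := Sym2.sortEquiv.symm_apply_apply
  have sup_mem : ∀ e : G.edgeSet, (e : Sym2 V).sup ∈ parents G (e : Sym2 V).inf := fun e => by
    have hadj : G.Adj (e : Sym2 V).inf (e : Sym2 V).sup := by
      rw [← G.mem_edgeSet, mk_inf_sup]
      exact e.2
    exact mem_parents.2 ⟨hadj, (Sym2.inf_le_sup _).lt_of_ne hadj.ne⟩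
  rintro e f hef ⟨x, hx, y, hy, hxy⟩ hc
  rw [← mk_inf_sup e] at hx
  rw [← mk_inf_sup f] at hy
  refine hef (Subtype.ext ?_)
  rw [← mk_inf_sup e, ← mk_inf_sup f]
  obtain rfl | hxy := hxy
  · exact hS.eq_of_color_eq_of_mem hG (sup_mem e) (sup_mem f) hc hx hy
  obtain hlt | hlt := hxy.ne.lt_or_gt
  · exact hS.eq_of_color_eq_of_parent hG (sup_mem e) (sup_mem f) hc hx hy
      (mem_parents.2 ⟨hxy, hlt⟩)
  · exact (hS.eq_of_color_eq_of_parent hG (sup_mem f) (sup_mem e) hc.symm hy hx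
      (mem_parents.2 ⟨hxy.symm, hlt⟩)).symm

end PaletteColoring

theorem strongChromaticIndex_le_of_isKDegenerate_two {V : Type*} [Fintype V] [DecidableEq V]
    {G : SimpleGraph V} [DecidableRel G.Adj] (hG : G.IsKDegenerate 2) {g n : ℕ}
    (hg : 4 * g ^ 2 < G.maxDegree) (hn : n + g = 5 * G.maxDegree + 1) :
    G.strongChromaticIndex ≤ n := by
  obtain ⟨_, hG⟩ := exists_linearOrder hG
  obtain ⟨S, hS⟩ := PaletteColoring.exists_isProperOn_univ (C := Fin n) hG hg
    (by rwa [Fintype.card_fin])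
  exact Nat.sInf_le ⟨_, hS.isStrongEdgeColoring hG⟩

theorem strongChromaticIndex_eq_zero_of_maxDegree_eq_zero {V : Type*} [Fintype V]
    {G : SimpleGraph V} [DecidableRel G.Adj] (h : G.maxDegree = 0) :
    G.strongChromaticIndex = 0 := by
  obtain rfl := G.maxDegree_eq_zero_iff.1 h
  have : IsEmpty (⊥ : SimpleGraph V).edgeSet := Set.isEmpty_coe_sort.2 SimpleGraph.edgeSet_bot
  exact Nat.le_zero.1 (Nat.sInf_le ⟨isEmptyElim, isEmptyElim⟩)

theorem rpow_half_sub_le_half_sqrt {ε x : ℝ} (hε : 0 < ε) (hx : (4 : ℝ) ^ (1 / (2 * ε)) ≤ x) :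
    x ^ (1 / 2 - ε) ≤ √x / 2 := by
  have pow_pos : (0 : ℝ) < 4 ^ (1 / (2 * ε)) := Real.rpow_pos_of_pos four_pos _
  have x_pos : 0 < x := pow_pos.trans_le hx
  have two_le : 2 ≤ x ^ ε :=
    calc (2 : ℝ) = √4 := by rw [show (4 : ℝ) = 2 ^ 2 by norm_num, Real.sqrt_sq zero_le_two]
      _ = (4 ^ (1 / (2 * ε))) ^ ε := by
        rw [← Real.rpow_mul zero_le_four, Real.sqrt_eq_rpow]
        congr 1
        field_simp
      _ ≤ x ^ ε := Real.rpow_le_rpow pow_pos.le hx hε.le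
  rw [Real.rpow_sub x_pos, ← Real.sqrt_eq_rpow]
  gcongr

end TwoDegenerate

theorem strong_chromatic_index_two_degenerate_general {V : Type*} [Fintype V] [DecidableEq V]
    (G : SimpleGraph V) [DecidableRel G.Adj] (hdeg : G.IsKDegenerate 2) :
    (G.strongChromaticIndex : ℝ) ≤ 5 * (G.maxDegree : ℝ) - √(G.maxDegree : ℝ) / 2 + 2 := by
  obtain hΔ | hΔ := G.maxDegree.eq_zero_or_pos
  · rw [TwoDegenerate.strongChromaticIndex_eq_zero_of_maxDegree_eq_zero hΔ, hΔ]
    norm_num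
  have hsqrt : 0 < √(G.maxDegree : ℝ) := Real.sqrt_pos.2 (by exact_mod_cast hΔ)
  obtain ⟨g, hg⟩ := Nat.exists_eq_succ_of_ne_zero (Nat.ceil_pos.2 (half_pos hsqrt)).ne'
  have g_lt : (g : ℝ) < √(G.maxDegree : ℝ) / 2 := Nat.lt_ceil.1 (hg ▸ g.lt_succ_self)
  have le_g : √(G.maxDegree : ℝ) / 2 ≤ g + 1 := by exact_mod_cast hg ▸ Nat.le_ceil _
  have hgΔ : 4 * g ^ 2 < G.maxDegree := by
    have := Real.sq_sqrt (Nat.cast_nonneg (α := ℝ) G.maxDegree)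
    have : (4 * g ^ 2 : ℝ) < G.maxDegree := by nlinarith [Nat.cast_nonneg (α := ℝ) g]
    exact_mod_cast this
  obtain ⟨n, hn⟩ : ∃ n, n + g = 5 * G.maxDegree + 1 :=
    ⟨5 * G.maxDegree + 1 - g, Nat.sub_add_cancel (by nlinarith)⟩
  have hle : (G.strongChromaticIndex : ℝ) ≤ n := by
    exact_mod_cast TwoDegenerate.strongChromaticIndex_le_of_isKDegenerate_two hdeg hgΔ hn
  have : (n + g : ℝ) = 5 * G.maxDegree + 1 := by exact_mod_cast hn
  linarith

theorem strong_chromatic_index_two_degenerate {V : Type*} [Fintype V] [DecidableEq V]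
    (G : SimpleGraph V) [DecidableRel G.Adj] (ε : ℝ) (hε0 : 0 < ε) (hε : ε ≤ 1 / 2)
    (hdeg : G.IsKDegenerate 2)
    (hΔ : (4 : ℝ) ^ (1 / (2 * ε)) ≤ (G.maxDegree : ℝ)) :
    (G.strongChromaticIndex : ℝ) ≤
      5 * (G.maxDegree : ℝ) - (G.maxDegree : ℝ) ^ ((1 : ℝ) / 2 - ε) + 2 := by
  linarith [TwoDegenerate.rpow_half_sub_le_half_sqrt hε0 hΔ,
    strong_chromatic_index_two_degenerate_general G hdeg]
end

section
/- If G is a finite simple k-degenerate graph with maximum degree Δ ≥ k, then the strong chromatic index of G satisfies χ'_s(G) ≤ (4k − 2)Δ − 2k² + 1. -/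
/-!
Order the vertices so that each of them has at most `k` earlier neighbours, and colour the edges
greedily, by increasing rank of their earlier endpoint. When an edge `uv` with `u` before `v` is
reached, every coloured edge has an endpoint no later than `u`. So a coloured edge that avoids `u`
and `v` but meets a neighbour `w` of `x ∈ {u, v}` joins `w` to one of the at most `k - 1` earlier
neighbours of `w` other than `x`, unless `w` precedes `x`. At most `k` neighbours of `u` precede it,
and at most `k - 1` neighbours of `v` other than `u` precede `v`.
-/

open Classical

section

open scoped Finset

section Greedy

variable {E α : Type*} [Fintype E] [LinearOrder α] {H : SimpleGraph E} {g : E → α} {N : ℕ}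

theorem exists_pairwise_adj_imp_ne_of_card_le
    (h : ∀ e, #{e' | H.Adj e e' ∧ g e' ≤ g e} ≤ N) (S : Finset E) :
    ∃ C : E → Fin (N + 1), (S : Set E).Pairwise fun e e' => H.Adj e e' → C e ≠ C e' := by
  induction S using Finset.induction_on_max_value g with
  | empty => exact ⟨fun _ => 0, by simp⟩
  | insert a S ha hmax ih =>
    obtain ⟨C, hC⟩ := ih
    obtain ⟨c, -, hc⟩ : ∃ c ∈ Finset.univ, c ∉ Finset.image C {e | H.Adj a e ∧ g e ≤ g a} :=
      Finset.exists_mem_notMem_of_card_lt_card <|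
        (Finset.card_image_le.trans (h a)).trans_lt (by simp)
    have hne : ∀ e ∈ S, e ≠ a := fun e he => ne_of_mem_of_not_mem he ha
    have hfree : ∀ e ∈ S, H.Adj a e → C e ≠ c := fun e he hae hec =>
      hc (Finset.mem_image.2 ⟨e, by simp [hae, hmax e he], hec⟩)
    refine ⟨Function.update C a c, ?_⟩
    rw [Finset.coe_insert, Set.pairwise_insert_of_notMem ha]
    refine ⟨fun e he e' he' hee' => ?_, fun e he => ?_⟩
    · simp only [Function.update_of_ne (hne e he), Function.update_of_ne (hne e' he')]
      exact hC he he' hee'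
    · simp only [Function.update_self, Function.update_of_ne (hne e he)]
      exact ⟨fun hae => (hfree e he hae).symm, fun hea => hfree e he hea.symm⟩

theorem colorable_of_card_adj_le (h : ∀ e, #{e' | H.Adj e e' ∧ g e' ≤ g e} ≤ N) :
    H.Colorable (N + 1) := by
  obtain ⟨C, hC⟩ := exists_pairwise_adj_imp_ne_of_card_le h Finset.univ
  exact ⟨SimpleGraph.Coloring.mk C fun hee' => hC (by simp) (by simp) hee'.ne hee'⟩

end Greedy

section ConflictGraph

variable {V : Type*} {G : SimpleGraph V}

/-- The conflict graph on the edges of `G`, i.e. the square of the line graph: its proper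
colourings are the strong edge-colourings of `G`. -/
def strongConflictGraph (G : SimpleGraph V) : SimpleGraph G.edgeSet where
  Adj e e' := e ≠ e' ∧ ∃ x ∈ (e : Sym2 V), ∃ y ∈ (e' : Sym2 V), x = y ∨ G.Adj x y
  symm := ⟨fun _ _ ⟨hne, x, hx, y, hy, hxy⟩ =>
    ⟨hne.symm, y, hy, x, hx, hxy.imp Eq.symm SimpleGraph.Adj.symm⟩⟩
  loopless := ⟨fun _ h => h.1 rfl⟩

theorem strongChromaticIndex_le_of_colorable {n : ℕ} (h : (strongConflictGraph G).Colorable n) :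
    G.strongChromaticIndex ≤ n := by
  obtain ⟨C⟩ := h
  exact Nat.sInf_le ⟨C, fun e e' hne hee' => C.valid ⟨hne, hee'⟩⟩

end ConflictGraph

section DegeneracyOrdering

variable {V α : Type*} [LinearOrder α] {G : SimpleGraph V} [G.LocallyFinite] {f : V → α}
  {k : ℕ} {v w : V}

/-- The neighbours of `v` that come before `v` in the vertex ordering given by the ranks `f`. -/
def earlierNeighborFinset (G : SimpleGraph V) [G.LocallyFinite] (f : V → α) (v : V) : Finset V :=
  {w ∈ G.neighborFinset v | f w < f v}

/-- A `k`-degeneracy ordering of `G`, encoded by an injective ranking of the vertices: every vertex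
has at most `k` earlier neighbours. -/
structure IsDegeneracyOrdering (G : SimpleGraph V) [G.LocallyFinite] (k : ℕ) (f : V → α) :
    Prop where
  injective : Function.Injective f
  card_earlierNeighborFinset_le : ∀ v, #(earlierNeighborFinset G f v) ≤ k

theorem mem_earlierNeighborFinset : w ∈ earlierNeighborFinset G f v ↔ G.Adj v w ∧ f w < f v := by
  simp [earlierNeighborFinset]

theorem IsDegeneracyOrdering.card_erase_earlierNeighborFinset_le [DecidableEq V]
    (hf : IsDegeneracyOrdering G k f) (hvw : G.Adj v w) (hlt : f w < f v) :
    #((earlierNeighborFinset G f v).erase w) ≤ k - 1 := by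
  rw [Finset.card_erase_of_mem (mem_earlierNeighborFinset.2 ⟨hvw, hlt⟩)]
  exact Nat.sub_le_sub_right (hf.card_earlierNeighborFinset_le v) 1

end DegeneracyOrdering

section Existence

variable {V : Type*} [Fintype V] [DecidableEq V] {G : SimpleGraph V} [DecidableRel G.Adj] {k : ℕ}

theorem exists_injOn_card_adj_lt_le (h : G.IsKDegenerate k) (S : Finset V) :
    ∃ f : V → ℕ, Set.InjOn f S ∧ ∀ v ∈ S, #{w ∈ S | G.Adj v w ∧ f w < f v} ≤ k := by
  induction S using Finset.strongInduction with
  | H S ih =>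
    obtain rfl | hS := S.eq_empty_or_nonempty
    · exact ⟨fun _ => 0, by simp⟩
    obtain ⟨v, hvS, hvk⟩ := h S hS
    obtain ⟨T, hvT, rfl⟩ : ∃ T, v ∉ T ∧ insert v T = S :=
      ⟨S.erase v, Finset.notMem_erase v S, Finset.insert_erase hvS⟩
    obtain ⟨f, hf, hfk⟩ := ih T (Finset.ssubset_insert hvT)
    have hlt : ∀ w ∈ T, f w < T.sup f + 1 := fun w hw => Nat.lt_succ_of_le (Finset.le_sup hw)
    have hupdate : ∀ w ∈ T, Function.update f v (T.sup f + 1) w = f w := fun w hw =>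
      Function.update_of_ne (ne_of_mem_of_not_mem hw hvT) _ _
    refine ⟨Function.update f v (T.sup f + 1), ?_, fun w hw => ?_⟩
    · rw [Finset.coe_insert, Set.injOn_insert hvT]
      refine ⟨hf.congr fun w hw => (hupdate w hw).symm, ?_⟩
      rintro ⟨w, hw, hwv⟩
      rw [hupdate w hw, Function.update_self] at hwv
      exact (hlt w hw).ne hwv
    · obtain rfl | hw := Finset.mem_insert.1 hw
      · exact (Finset.card_le_card (Finset.monotone_filter_right _ fun _ _ hz => hz.1)).trans hvk
      · refine (Finset.card_le_card fun z hz => ?_).trans (hfk w hw)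
        obtain ⟨hz, hwz, hzw⟩ := Finset.mem_filter.1 hz
        rw [hupdate w hw] at hzw
        obtain hzv | hz := Finset.mem_insert.1 hz
        · rw [hzv, Function.update_self] at hzw
          exact absurd hzw (hlt w hw).not_gt
        · rw [hupdate z hz] at hzw
          exact Finset.mem_filter.2 ⟨hz, hwz, hzw⟩

theorem exists_isDegeneracyOrdering (h : G.IsKDegenerate k) :
    ∃ f : V → ℕ, IsDegeneracyOrdering G k f := by
  obtain ⟨f, hf, hfk⟩ := exists_injOn_card_adj_lt_le h Finset.univ
  refine ⟨f, by simpa using hf, fun v => (Finset.card_le_card fun w hw => ?_).trans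
    (hfk v (Finset.mem_univ v))⟩
  simpa using mem_earlierNeighborFinset.1 hw

end Existence

section Counting

variable {V α : Type*} [DecidableEq V] [LinearOrder α] {G : SimpleGraph V} [G.LocallyFinite]
  {f : V → α} {k d m : ℕ} {u v w x y z : V} {e : Sym2 V}

/-- The far endpoints `z ≠ x` of the edges `wz` having an endpoint that is no later than `x`. -/
def lowNeighborFinset (G : SimpleGraph V) [G.LocallyFinite] (f : V → α) (x w : V) : Finset V :=
  {z ∈ (G.neighborFinset w).erase x | min (f w) (f z) ≤ f x}

/-- The edges `wz` at distance one from `x`, with `w ≠ y` a neighbour of `x`, that have an endpoint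
no later than `x`. For an edge `xy` these are the early edges that conflict with `xy` through `x`
without being incident to `x`. -/
def lowEdgesNear (G : SimpleGraph V) [G.LocallyFinite] (f : V → α) (x y : V) : Finset (Sym2 V) :=
  ((G.neighborFinset x).erase y).biUnion fun w => (lowNeighborFinset G f x w).image (s(w, ·))

theorem mk_mem_lowEdgesNear (hxw : G.Adj x w) (hwz : G.Adj w z) (hwy : w ≠ y) (hzx : z ≠ x)
    (hlow : min (f w) (f z) ≤ f x) : s(w, z) ∈ lowEdgesNear G f x y :=
  Finset.mem_biUnion.2 ⟨w, by simp [hxw, hwy], Finset.mem_image_of_mem _ <| by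
    simp only [lowNeighborFinset, Finset.mem_filter, Finset.mem_erase,
      SimpleGraph.mem_neighborFinset]
    exact ⟨⟨hzx, hwz⟩, hlow⟩⟩

theorem card_erase_neighborFinset_le (hd : ∀ v, G.degree v ≤ d) (hvw : G.Adj v w) :
    #((G.neighborFinset v).erase w) ≤ d - 1 := by
  rw [Finset.card_erase_of_mem ((G.mem_neighborFinset v w).2 hvw)]
  exact Nat.sub_le_sub_right (hd v) 1

theorem card_lowNeighborFinset_le (hf : IsDegeneracyOrdering G k f) (hd : ∀ v, G.degree v ≤ d)
    (hxw : G.Adj x w) :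
    #(lowNeighborFinset G f x w) ≤ (k - 1) + if f w < f x then d - k else 0 := by
  split_ifs with hlt
  · have hle : #(lowNeighborFinset G f x w) ≤ d - 1 :=
      (Finset.card_filter_le _ _).trans (card_erase_neighborFinset_le hd hxw.symm)
    omega
  · have hxw' : f x < f w := (not_lt.1 hlt).lt_of_ne (hf.injective.ne hxw.ne)
    refine (Finset.card_le_card fun z hz => ?_).trans
      (hf.card_erase_earlierNeighborFinset_le hxw.symm hxw')
    simp only [lowNeighborFinset, Finset.mem_filter, Finset.mem_erase,
      SimpleGraph.mem_neighborFinset] at hz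
    obtain ⟨⟨hzx, hwz⟩, hlow⟩ := hz
    have hzw : f z < f w := ((min_le_iff.1 hlow).resolve_left hxw'.not_ge).trans_lt hxw'
    exact Finset.mem_erase.2 ⟨hzx, mem_earlierNeighborFinset.2 ⟨hwz, hzw⟩⟩

theorem card_lowEdgesNear_le (hf : IsDegeneracyOrdering G k f) (hd : ∀ v, G.degree v ≤ d)
    (hxy : G.Adj x y) (hm : #((earlierNeighborFinset G f x).erase y) ≤ m) :
    #(lowEdgesNear G f x y) ≤ (d - 1) * (k - 1) + m * (d - k) := by
  calc #(lowEdgesNear G f x y)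
      ≤ ∑ w ∈ (G.neighborFinset x).erase y, ((k - 1) + if f w < f x then d - k else 0) :=
        Finset.card_biUnion_le.trans <| Finset.sum_le_sum fun w hw =>
          Finset.card_image_le.trans <| card_lowNeighborFinset_le hf hd <|
            (G.mem_neighborFinset x w).1 (Finset.mem_of_mem_erase hw)
    _ = #((G.neighborFinset x).erase y) * (k - 1)
          + #((earlierNeighborFinset G f x).erase y) * (d - k) := by
        rw [Finset.sum_add_distrib, Finset.sum_const, ← Finset.sum_filter, Finset.sum_const,
          Finset.filter_erase, smul_eq_mul, smul_eq_mul, earlierNeighborFinset]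
    _ ≤ (d - 1) * (k - 1) + m * (d - k) := by
        gcongr
        exact card_erase_neighborFinset_le hd hxy

/-- A finset containing every edge that conflicts with `uv` and has an endpoint no later than `u`,
where `u` is the earlier endpoint of `uv`. -/
def lowConflicts (G : SimpleGraph V) [G.LocallyFinite] (f : V → α) (u v : V) : Finset (Sym2 V) :=
  ((G.neighborFinset u).erase v).image (s(u, ·)) ∪
    ((earlierNeighborFinset G f v).erase u).image (s(v, ·)) ∪
      (lowEdgesNear G f u v ∪ lowEdgesNear G f v u)

theorem mem_lowConflicts (hlt : f u < f v) (he : e ∈ G.edgeSet) (hne : e ≠ s(u, v))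
    (hlow : (e.map f).inf ≤ f u) (hconflict : ∃ x ∈ s(u, v), ∃ y ∈ e, x = y ∨ G.Adj x y) :
    e ∈ lowConflicts G f u v := by
  simp only [lowConflicts, Finset.mem_union]
  by_cases hu : u ∈ e
  · obtain ⟨z, rfl⟩ := hu
    have hzv : z ≠ v := fun hzv => hne (by rw [hzv])
    exact .inl <| .inl <| Finset.mem_image_of_mem _ <|
      Finset.mem_erase.2 ⟨hzv, (G.mem_neighborFinset u z).2 he⟩
  by_cases hv : v ∈ e
  · obtain ⟨z, rfl⟩ := hv
    have hzu : z ≠ u := fun hzu => hu (by simp [hzu])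
    have hzv : f z < f v := ((min_le_iff.1 hlow).resolve_left hlt.not_ge).trans_lt hlt
    exact .inl <| .inr <| Finset.mem_image_of_mem _ <|
      Finset.mem_erase.2 ⟨hzu, mem_earlierNeighborFinset.2 ⟨he, hzv⟩⟩
  obtain ⟨x, hx, w, ⟨z, rfl⟩, hxw⟩ := hconflict
  simp only [Sym2.mem_iff, not_or] at hu hv
  obtain rfl | rfl := Sym2.mem_iff.1 hx
  · exact .inr <| .inl <|
      mk_mem_lowEdgesNear (hxw.resolve_left hu.1) he (Ne.symm hv.1) (Ne.symm hu.2) hlow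
  · exact .inr <| .inr <|
      mk_mem_lowEdgesNear (hxw.resolve_left hv.1) he (Ne.symm hu.1) (Ne.symm hv.2)
        (hlow.trans hlt.le)

theorem card_lowConflicts_le (hf : IsDegeneracyOrdering G k f) (hd : ∀ v, G.degree v ≤ d)
    (huv : G.Adj u v) (hlt : f u < f v) :
    #(lowConflicts G f u v) ≤
      (d - 1) + (k - 1) + (2 * (d - 1) * (k - 1) + (2 * k - 1) * (d - k)) := by
  have hback := hf.card_erase_earlierNeighborFinset_le huv.symm hlt
  have hu := card_lowEdgesNear_le hf hd huv <|
    Finset.card_erase_le.trans (hf.card_earlierNeighborFinset_le u)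
  have hv := card_lowEdgesNear_le hf hd huv.symm hback
  calc #(lowConflicts G f u v)
      ≤ #((G.neighborFinset u).erase v) + #((earlierNeighborFinset G f v).erase u)
          + (#(lowEdgesNear G f u v) + #(lowEdgesNear G f v u)) := by
        refine (Finset.card_union_le _ _).trans ?_
        gcongr
        · exact (Finset.card_union_le _ _).trans
            (add_le_add Finset.card_image_le Finset.card_image_le)
        · exact Finset.card_union_le _ _
    _ ≤ (d - 1) + (k - 1)
          + ((d - 1) * (k - 1) + k * (d - k) + ((d - 1) * (k - 1) + (k - 1) * (d - k))) := by
        gcongr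
        exact card_erase_neighborFinset_le hd huv
    _ = (d - 1) + (k - 1) + (2 * (d - 1) * (k - 1) + (2 * k - 1) * (d - k)) := by
        rw [show 2 * k - 1 = k + (k - 1) by omega]
        ring

end Counting

section StrongChromaticIndex

variable {V α : Type*} [LinearOrder α] {G : SimpleGraph V} [G.LocallyFinite] {f : V → α}
  {k d : ℕ}

theorem IsDegeneracyOrdering.card_conflicts_le [Fintype G.edgeSet]
    (hf : IsDegeneracyOrdering G k f) (hd : ∀ v, G.degree v ≤ d) (e : G.edgeSet) :
    #{e' | (strongConflictGraph G).Adj e e' ∧ (e'.1.map f).inf ≤ (e.1.map f).inf} ≤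
      (d - 1) + (k - 1) + (2 * (d - 1) * (k - 1) + (2 * k - 1) * (d - k)) := by
  obtain ⟨e, he⟩ := e
  obtain ⟨u, v, hlt, rfl⟩ : ∃ u v, f u < f v ∧ e = s(u, v) := by
    induction e using Sym2.ind with
    | _ a b =>
      obtain hab | hba := (hf.injective.ne (SimpleGraph.Adj.ne he)).lt_or_gt
      · exact ⟨a, b, hab, rfl⟩
      · exact ⟨b, a, hba, Sym2.eq_swap⟩
  refine (Finset.card_le_card_of_injOn Subtype.val (fun e' he' => ?_)
    Subtype.val_injective.injOn).trans (card_lowConflicts_le hf hd he hlt)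
  obtain ⟨⟨hne, hconflict⟩, hlow⟩ := (Finset.mem_filter.1 he').2
  rw [Sym2.map_mk, Sym2.inf_mk, min_eq_left hlt.le] at hlow
  exact mem_lowConflicts hlt e'.2 (fun h => hne (Subtype.ext h.symm)) hlow hconflict

theorem IsDegeneracyOrdering.strongChromaticIndex_le [Finite G.edgeSet]
    (hf : IsDegeneracyOrdering G k f) (hd : ∀ v, G.degree v ≤ d) :
    G.strongChromaticIndex ≤
      (d - 1) + (k - 1) + (2 * (d - 1) * (k - 1) + (2 * k - 1) * (d - k)) + 1 := by
  have := Fintype.ofFinite G.edgeSet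
  exact strongChromaticIndex_le_of_colorable (colorable_of_card_adj_le (hf.card_conflicts_le hd))

end StrongChromaticIndex

end

theorem strong_chromatic_index_k_degenerate {V : Type*} [Fintype V] [DecidableEq V]
    (G : SimpleGraph V) [DecidableRel G.Adj] (k : ℕ) (hk : 0 < k)
    (hdeg : G.IsKDegenerate k) (hΔ : k ≤ G.maxDegree) :
    (G.strongChromaticIndex : ℤ) ≤
      (4 * (k : ℤ) - 2) * (G.maxDegree : ℤ) - 2 * (k : ℤ) ^ 2 + 1 := by
  obtain ⟨f, hf⟩ := exists_isDegeneracyOrdering hdeg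
  have hle := hf.strongChromaticIndex_le G.degree_le_maxDegree
  zify [hΔ, hk, hk.trans_le hΔ, show 1 ≤ 2 * k by omega] at hle
  linarith
end

section
/- If G is a finite simple 2-degenerate graph with maximum degree Δ ≥ 2, then the strong chromatic index of G satisfies χ'_s(G) ≤ 6Δ − 7. -/
open Classical

/-!
Edges are peeled off one at a time and colored greedily in the reverse order. Let `G` be
`k`-degenerate with maximum degree at most `Δ`, and let `H` be what is left of `G` at some stage.
Degeneracy of `H` gives an edge `vw` with `d_H(v) ≤ k` such that at most `k` neighbors of `w` in `H`
have degree more than `k` in `H`; this edge is peeled next. An edge of `H` conflicting with `vw`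
meets `N_G(v) \ {w}` or `N_G(w) \ {v}`, so one has to bound the `H`-degrees there, including those
of vertices whose edge to `v` or `w` is already gone.

Call a `G`-neighbor of `u` active if it is still an `H`-neighbor of `u` or has `H`-degree at least
`k`. Since `d_H(v) < k` once `vw` is peeled, `v` stops being an active neighbor of `w`; hence as
long as `u` has more than `k` active neighbors, all of them are `H`-neighbors of `u`. It follows
that fewer than `k` vertices of `N_G(v) \ {w}` have `H`-degree at least `k`, and at most `k`
vertices of `N_G(w) \ {v}` have `H`-degree more than `k`, so `vw` has at most
`(k - 1)(Δ - 1) + (k - 1)(Δ - k + 1) + k(Δ - 1) + k(Δ - k) = (4k - 2)Δ - 2k²` conflicts.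
-/

namespace StrongEdgeColoring

open Finset

section ConflictGraph

variable {V : Type*}

/-- The conflict graph of `G` (the square of its line graph): two pairs of vertices are adjacent if
they must get different colors in a strong edge-coloring. It is defined on all of `Sym2 V`, so that
the edges of every subgraph of `G` are among its vertices. -/
def conflictGraph (G : SimpleGraph V) : SimpleGraph (Sym2 V) where
  Adj e f := e ≠ f ∧ ∃ x ∈ e, ∃ y ∈ f, x = y ∨ G.Adj x y
  symm := ⟨fun _ _ ⟨hne, x, hx, y, hy, hxy⟩ =>
    ⟨hne.symm, y, hy, x, hx, hxy.imp Eq.symm SimpleGraph.Adj.symm⟩⟩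
  loopless := ⟨fun _ h => h.1 rfl⟩

lemma strongChromaticIndex_le_of_colorable {G : SimpleGraph V} {n : ℕ}
    (h : ((conflictGraph G).induce G.edgeSet).Colorable n) : G.strongChromaticIndex ≤ n := by
  obtain ⟨C⟩ := h
  exact Nat.sInf_le ⟨C, fun e f hne hconf => C.valid ⟨Subtype.coe_ne_coe.2 hne, hconf⟩⟩

lemma colorable_induce_insert {L : SimpleGraph V} {s : Set V} {a : V} {n : ℕ} {t : Finset V}
    (h : (L.induce s).Colorable n) (hsub : ∀ b ∈ s, L.Adj a b → b ∈ t) (hcard : #t < n) :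
    (L.induce (insert a s)).Colorable n := by
  obtain ⟨C⟩ := h
  obtain ⟨col, hcol⟩ : ∃ col, col ∉ (t.subtype (· ∈ s)).image C := by
    by_contra! hall
    have hn : n ≤ #t := calc
      n = #((t.subtype (· ∈ s)).image C) := by rw [eq_univ_iff_forall.2 hall, card_fin]
      _ ≤ #(t.subtype (· ∈ s)) := card_image_le
      _ ≤ #t := by rw [card_subtype]; exact card_filter_le _ _
    omega
  have hfree : ∀ b (hb : b ∈ s), L.Adj a b → C ⟨b, hb⟩ ≠ col := fun b hb hab heq =>
    hcol (mem_image.2 ⟨⟨b, hb⟩, mem_subtype.2 (hsub b hb hab), heq⟩)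
  refine ⟨SimpleGraph.Coloring.mk
    (fun x => if hx : x.1 = a then col else C ⟨x, x.2.resolve_left hx⟩) ?_⟩
  rintro ⟨x, hx⟩ ⟨y, hy⟩ (hxy : L.Adj x y)
  by_cases hxa : x = a <;> by_cases hya : y = a
  · exact absurd (hxa.trans hya.symm) hxy.ne
  · simpa only [hxa, hya, dite_true, dite_false] using
      (hfree y (hy.resolve_left hya) (hxa ▸ hxy)).symm
  · simpa only [hxa, hya, dite_true, dite_false] using
      hfree x (hx.resolve_left hxa) (hya ▸ hxy.symm)
  · simpa only [hxa, hya, dite_false] using C.valid (v := ⟨x, _⟩) (w := ⟨y, _⟩) hxy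

end ConflictGraph

lemma sum_le_of_card_filter_lt_le {ι : Type*} {N : Finset ι} {d : ι → ℕ} {a D t : ℕ}
    (hd : ∀ i ∈ N, d i ≤ D) (ht : #{i ∈ N | a < d i} ≤ t) :
    ∑ i ∈ N, d i ≤ #N * a + t * (D - a) := by
  calc ∑ i ∈ N, d i ≤ ∑ i ∈ N, (a + if a < d i then D - a else 0) := by
        refine sum_le_sum fun i hi => ?_
        have := hd i hi
        split_ifs <;> omega
    _ = #N * a + #{i ∈ N | a < d i} * (D - a) := by
        rw [sum_add_distrib, ← sum_filter, sum_const, sum_const, smul_eq_mul, smul_eq_mul]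
    _ ≤ #N * a + t * (D - a) := by gcongr

variable {V : Type*} [Fintype V] {G H : SimpleGraph V}
  [DecidableRel G.Adj] [hdec : DecidableRel H.Adj] {k Δ n : ℕ} {v w : V}

/-- The neighbors of `u` in `G` that still matter once only the edges of `H` are left: those joined
to `u` in `H`, and those of degree at least `k` in `H`. -/
def activeNeighbors (k : ℕ) (G H : SimpleGraph V) [DecidableRel G.Adj] [DecidableRel H.Adj]
    (u : V) : Finset V :=
  {x ∈ G.neighborFinset u | H.Adj u x ∨ k ≤ H.degree x}

lemma mem_activeNeighbors {u x : V} :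
    x ∈ activeNeighbors k G H u ↔ G.Adj u x ∧ (H.Adj u x ∨ k ≤ H.degree x) := by
  simp [activeNeighbors]

/-- The invariant of the peeling process: `H` is a subgraph of `G`, and each vertex whose active
neighbors are not all `H`-neighbors has at most `k` active neighbors. -/
structure IsPeelingStage (k : ℕ) (G H : SimpleGraph V) [DecidableRel G.Adj]
    [DecidableRel H.Adj] : Prop where
  le : H ≤ G
  active : ∀ u, activeNeighbors k G H u ⊆ H.neighborFinset u ∨ #(activeNeighbors k G H u) ≤ k

lemma IsPeelingStage.refl (k : ℕ) (G : SimpleGraph V) [DecidableRel G.Adj] : IsPeelingStage k G G :=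
  ⟨le_rfl, fun _ => Or.inl (filter_subset _ _)⟩

variable [DecidableEq V]

lemma isKDegenerate_mono (hle : H ≤ G) (hG : G.IsKDegenerate k) : H.IsKDegenerate k := by
  intro S hS
  obtain ⟨v, hv, hcard⟩ := hG S hS
  exact ⟨v, hv, (card_le_card (monotone_filter_right S fun _ _ h => hle h)).trans hcard⟩

lemma degree_deleteEdges_lt (h : H.Adj v w) :
    (H.deleteEdges {s(v, w)}).degree v < H.degree v := by
  refine card_lt_card ((ssubset_iff_of_subset fun x hx => ?_).2 ⟨w, ?_⟩)
  · rw [SimpleGraph.mem_neighborFinset] at hx ⊢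
    exact SimpleGraph.deleteEdges_le _ hx
  · simpa using h

/-- The edge `vw` of `H` may be removed next: `v` has degree at most `k`, and `w` has at most `k`
neighbors of degree more than `k`. -/
structure IsPeelable (k : ℕ) (H : SimpleGraph V) [DecidableRel H.Adj] (v w : V) : Prop where
  adj : H.Adj v w
  degree_le : H.degree v ≤ k
  card_le : #{z ∈ H.neighborFinset w | k < H.degree z} ≤ k

lemma exists_isPeelable (hH : H.IsKDegenerate k) (hne : H.edgeSet.Nonempty) :
    ∃ v w, IsPeelable k H v w := by
  set S : Finset V := {z | k < H.degree z} with hS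
  by_cases hSne : S.Nonempty
  · obtain ⟨w, hwS, hw⟩ := hH S hSne
    have hcard : #{z ∈ H.neighborFinset w | k < H.degree z} ≤ k := by
      convert hw using 2
      ext z
      simp [hS, and_comm]
    obtain ⟨v, hv, hvk⟩ : ∃ v ∈ H.neighborFinset w, ¬ k < H.degree v := by
      by_contra! hall
      rw [filter_true_of_mem hall, H.card_neighborFinset_eq_degree] at hcard
      exact hcard.not_gt (mem_filter.1 hwS).2
    exact ⟨v, w, ((H.mem_neighborFinset _ _).1 hv).symm, not_lt.1 hvk, hcard⟩
  · have hall : ∀ z, H.degree z ≤ k := by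
      simpa [hS, filter_eq_empty_iff] using hSne
    obtain ⟨e, he⟩ := hne
    induction e with
    | h v w => exact ⟨v, w, he, hall v, (card_filter_le _ _).trans (hall w)⟩

namespace IsPeelingStage

lemma deleteEdges (h : IsPeelingStage k G H) (hvw : IsPeelable k H v w) :
    IsPeelingStage k G (H.deleteEdges {s(v, w)}) := by
  have hle : H.deleteEdges {s(v, w)} ≤ H := SimpleGraph.deleteEdges_le _
  refine ⟨hle.trans h.le, fun u => or_iff_not_imp_right.2 fun hcard' => ?_⟩
  have hsub : activeNeighbors k G (H.deleteEdges {s(v, w)}) u ⊆ activeNeighbors k G H u := by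
    intro x hx
    rw [mem_activeNeighbors] at hx ⊢
    exact hx.imp_right (Or.imp (fun h => hle h) fun h =>
      h.trans (SimpleGraph.degree_le_of_le hle))
  have hcard : k < #(activeNeighbors k G H u) :=
    (not_le.1 hcard').trans_le (card_le_card hsub)
  have hnbr := (h.active u).resolve_right hcard.not_ge
  have huv : u ≠ v := by
    rintro rfl
    exact (hcard.trans_le (card_le_card hnbr)).not_ge hvw.degree_le
  intro x hx
  have hadj : H.Adj u x := (H.mem_neighborFinset _ _).1 (hnbr (hsub hx))
  rw [SimpleGraph.mem_neighborFinset]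
  refine (mem_activeNeighbors.1 hx).2.elim id fun hkx => ?_
  have hxv : x ≠ v := by
    rintro rfl
    exact hkx.not_gt ((degree_deleteEdges_lt hvw.adj).trans_le hvw.degree_le)
  have hne : s(u, x) ≠ s(v, w) := fun heq => by
    have hmem : v ∈ s(u, x) := heq ▸ Sym2.mem_mk_left v w
    exact (Sym2.mem_iff.1 hmem).elim huv.symm hxv.symm
  exact SimpleGraph.deleteEdges_adj.2 ⟨hadj, hne⟩

lemma card_filter_le_degree_lt (h : IsPeelingStage k G H) (hvw : IsPeelable k H v w) :
    #{z ∈ (G.neighborFinset v).erase w | k ≤ H.degree z} < k := by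
  have hw : w ∈ activeNeighbors k G H v :=
    mem_activeNeighbors.2 ⟨h.le hvw.adj, Or.inl hvw.adj⟩
  have hsub : {z ∈ (G.neighborFinset v).erase w | k ≤ H.degree z} ⊆
      (activeNeighbors k G H v).erase w := by
    intro z hz
    simp only [mem_filter, mem_erase, SimpleGraph.mem_neighborFinset] at hz
    exact mem_erase.2 ⟨hz.1.1, mem_activeNeighbors.2 ⟨hz.1.2, Or.inr hz.2⟩⟩
  have hactive : #(activeNeighbors k G H v) ≤ k :=
    (h.active v).elim (fun hs => (card_le_card hs).trans hvw.degree_le) id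
  exact (card_le_card hsub).trans_lt ((card_erase_lt_of_mem hw).trans_le hactive)

lemma card_filter_lt_degree_le (h : IsPeelingStage k G H) (hvw : IsPeelable k H v w) :
    #{z ∈ (G.neighborFinset w).erase v | k < H.degree z} ≤ k := by
  have hsub : {z ∈ (G.neighborFinset w).erase v | k < H.degree z} ⊆
      {z ∈ activeNeighbors k G H w | k < H.degree z} := by
    intro z hz
    simp only [mem_filter, mem_erase, SimpleGraph.mem_neighborFinset] at hz
    exact mem_filter.2 ⟨mem_activeNeighbors.2 ⟨hz.1.2, Or.inr hz.2.le⟩, hz.2⟩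
  refine (card_le_card hsub).trans ?_
  rcases h.active w with hs | hcard
  · exact (card_le_card (filter_subset_filter _ hs)).trans hvw.card_le
  · exact (card_filter_le _ _).trans hcard

end IsPeelingStage

/-- The edges of `H` at a neighbor of `v` other than `w`, or at a neighbor of `w` other than `v`,
neighbors being taken in `G`. -/
def edgesNear (G H : SimpleGraph V) [DecidableRel G.Adj] [DecidableRel H.Adj] (v w : V) :
    Finset (Sym2 V) :=
  ((G.neighborFinset v).erase w).biUnion (fun z => H.incidenceFinset z) ∪
    ((G.neighborFinset w).erase v).biUnion fun z => H.incidenceFinset z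

lemma edgesNear_comm : edgesNear G H v w = edgesNear G H w v :=
  union_comm _ _

lemma mem_edgesNear_of_eq_or_adj (hle : H ≤ G) {f : Sym2 V} (hf : f ∈ H.edgeSet)
    (hne : f ≠ s(v, w)) {y : V} (hy : y ∈ f) (hvy : v = y ∨ G.Adj v y) :
    f ∈ edgesNear G H v w := by
  simp only [edgesNear, mem_union, mem_biUnion, mem_erase, SimpleGraph.mem_neighborFinset,
    SimpleGraph.mem_incidenceFinset, SimpleGraph.incidenceSet, Set.mem_sep_iff]
  by_cases hyw : y = w
  · obtain ⟨z, rfl⟩ := hy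
    subst hyw
    exact Or.inr ⟨z, ⟨fun hzv => hne (by rw [hzv, Sym2.eq_swap]), hle hf⟩, hf,
      Sym2.mem_mk_right _ _⟩
  · rcases hvy with rfl | hvy
    · obtain ⟨z, rfl⟩ := hy
      exact Or.inl ⟨z, ⟨fun hzw => hne (by rw [hzw]), hle hf⟩, hf, Sym2.mem_mk_right _ _⟩
    · exact Or.inl ⟨y, ⟨hyw, hvy⟩, hf, hy⟩

lemma mem_edgesNear_of_conflict (hle : H ≤ G) {f : Sym2 V} (hf : f ∈ H.edgeSet)
    (hadj : (conflictGraph G).Adj s(v, w) f) : f ∈ edgesNear G H v w := by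
  obtain ⟨hne, x, hx, y, hy, hxy⟩ := hadj
  rcases Sym2.mem_iff.1 hx with rfl | rfl
  · exact mem_edgesNear_of_eq_or_adj hle hf hne.symm hy hxy
  · rw [edgesNear_comm]
    exact mem_edgesNear_of_eq_or_adj hle hf (Sym2.eq_swap ▸ hne.symm) hy hxy

lemma card_erase_neighborFinset_le (hΔ : G.maxDegree ≤ Δ) (h : G.Adj v w) :
    #((G.neighborFinset v).erase w) ≤ Δ - 1 := by
  rw [card_erase_of_mem ((G.mem_neighborFinset _ _).2 h), G.card_neighborFinset_eq_degree]
  exact Nat.sub_le_sub_right ((G.degree_le_maxDegree v).trans hΔ) 1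

lemma card_biUnion_incidenceFinset_le {N : Finset V} {a t : ℕ} (hΔ : H.maxDegree ≤ Δ)
    (ht : #{z ∈ N | a < H.degree z} ≤ t) :
    #(N.biUnion fun z => H.incidenceFinset z) ≤ #N * a + t * (Δ - a) := calc
  #(N.biUnion fun z => H.incidenceFinset z)
    ≤ ∑ z ∈ N, H.degree z := by
      simpa only [SimpleGraph.card_incidenceFinset_eq_degree] using
        card_biUnion_le (s := N) (t := fun z => H.incidenceFinset z)
  _ ≤ #N * a + t * (Δ - a) :=
      sum_le_of_card_filter_lt_le (fun z _ => (H.degree_le_maxDegree z).trans hΔ) ht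

/-- The bound is `(4k - 2)Δ - 2k²`, with terms moved so that no truncated subtraction occurs. -/
lemma card_edgesNear_le (hΔ : G.maxDegree ≤ Δ) (hkΔ : k ≤ Δ) (h : IsPeelingStage k G H)
    (hvw : IsPeelable k H v w) :
    #(edgesNear G H v w) + (2 * Δ + 2 * k ^ 2) ≤ 4 * k * Δ := by
  have hHΔ : H.maxDegree ≤ Δ := (SimpleGraph.maxDegree_mono h.le).trans hΔ
  have hk : 0 < k := (Nat.zero_le _).trans_lt (h.card_filter_le_degree_lt hvw)
  obtain ⟨j, rfl⟩ := Nat.exists_eq_succ_of_ne_zero hk.ne'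
  obtain ⟨m, rfl⟩ := Nat.exists_eq_add_of_le hkΔ
  have hv : #(((G.neighborFinset v).erase w).biUnion fun z => H.incidenceFinset z) ≤
      (j + m) * j + j * (m + 1) := by
    refine (card_biUnion_incidenceFinset_le hHΔ
      (Nat.lt_succ_iff.1 (h.card_filter_le_degree_lt hvw))).trans ?_
    gcongr
    · exact (card_erase_neighborFinset_le hΔ (h.le hvw.adj)).trans (by omega)
    · omega
  have hw : #(((G.neighborFinset w).erase v).biUnion fun z => H.incidenceFinset z) ≤
      (j + m) * (j + 1) + (j + 1) * m := by
    refine (card_biUnion_incidenceFinset_le hHΔ (h.card_filter_lt_degree_le hvw)).trans ?_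
    gcongr
    · exact (card_erase_neighborFinset_le hΔ (h.le hvw.adj.symm)).trans (by omega)
    · omega
  calc #(edgesNear G H v w) + (2 * (j + 1 + m) + 2 * (j + 1) ^ 2)
      ≤ (j + m) * j + j * (m + 1) + ((j + m) * (j + 1) + (j + 1) * m) +
          (2 * (j + 1 + m) + 2 * (j + 1) ^ 2) := by
        gcongr
        exact (card_union_le _ _).trans (add_le_add hv hw)
    _ = 4 * (j + 1) * (j + 1 + m) := by ring

theorem colorable_induce_edgeSet (hG : G.IsKDegenerate k) (hΔ : G.maxDegree ≤ Δ) (hkΔ : k ≤ Δ)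
    (hn : 4 * k * Δ < n + (2 * Δ + 2 * k ^ 2)) (h : IsPeelingStage k G H) :
    ((conflictGraph G).induce H.edgeSet).Colorable n := by
  induction H using WellFoundedLT.induction generalizing hdec with
  | ind H ih =>
  rcases H.edgeSet.eq_empty_or_nonempty with hempty | hne
  · have : IsEmpty H.edgeSet := Set.isEmpty_coe_sort.2 hempty
    exact .of_isEmpty n
  obtain ⟨v, w, hvw⟩ := exists_isPeelable (isKDegenerate_mono h.le hG) hne
  have hlt : H.deleteEdges {s(v, w)} < H := by
    refine (SimpleGraph.deleteEdges_le _).lt_of_ne fun heq => ?_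
    exact Set.disjoint_singleton_right.1 (SimpleGraph.deleteEdges_eq_self.1 heq) hvw.adj
  have hinsert : H.edgeSet = insert s(v, w) (H.deleteEdges {s(v, w)}).edgeSet := by
    rw [SimpleGraph.edgeSet_deleteEdges, Set.insert_sdiff_singleton, Set.insert_eq_of_mem]
    exact hvw.adj
  have hcard : #(edgesNear G H v w) < n := by
    have := card_edgesNear_le hΔ hkΔ h hvw
    omega
  rw [hinsert]
  exact colorable_induce_insert (ih _ hlt (h.deleteEdges hvw))
    (fun f hf hadj => mem_edgesNear_of_conflict h.le (SimpleGraph.edgeSet_mono hlt.le hf) hadj)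
    hcard

end StrongEdgeColoring

open StrongEdgeColoring in
theorem strong_chromatic_index_two_degenerate_six_general {V : Type*} [Fintype V] [DecidableEq V]
    (G : SimpleGraph V) [DecidableRel G.Adj] {k Δ : ℕ} (hdeg : G.IsKDegenerate k) (hk : 1 ≤ k)
    (hkΔ : k ≤ Δ) (hΔ : G.maxDegree ≤ Δ) :
    (G.strongChromaticIndex : ℤ) ≤ (4 * k - 2) * Δ - 2 * k ^ 2 + 1 := by
  have hχ : G.strongChromaticIndex ≤ 4 * k * Δ + 1 - (2 * Δ + 2 * k ^ 2) :=
    strongChromaticIndex_le_of_colorable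
      (colorable_induce_edgeSet hdeg hΔ hkΔ (by omega) (.refl k G))
  have hpos : 2 * Δ + 2 * k ^ 2 ≤ 4 * k * Δ + 1 := by nlinarith
  zify [hpos] at hχ
  linarith

theorem strong_chromatic_index_two_degenerate_six {V : Type*} [Fintype V] [DecidableEq V]
    (G : SimpleGraph V) [DecidableRel G.Adj]
    (hdeg : G.IsKDegenerate 2) (hΔ : 2 ≤ G.maxDegree) :
    (G.strongChromaticIndex : ℤ) ≤ 6 * (G.maxDegree : ℤ) - 7 := by
  have h := strong_chromatic_index_two_degenerate_six_general G hdeg one_le_two hΔ le_rfl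
  push_cast at h
  linarith
end

section
/- Every finite simple 2-degenerate graph G that contains a vertex of degree at least 3 contains a vertex u of degree at least 3 such that u has at most two neighbors of degree more than 2; that is, G contains a special vertex of degree at least 3. -/
open Classical

theorem exists_special_vertex_of_two_degenerate_general {V : Type*} [Fintype V] [DecidableEq V]
    (G : SimpleGraph V) [DecidableRel G.Adj] {k : ℕ} (hdeg : G.IsKDegenerate k)
    (p : V → Prop) [DecidablePred p] (h : ∃ v, p v) :
    ∃ u, p u ∧ ((G.neighborFinset u).filter p).card ≤ k := by
  have hne : (Finset.univ.filter p).Nonempty := Finset.filter_nonempty_iff.2 (by simpa using h)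
  obtain ⟨u, hu, hcard⟩ := hdeg (Finset.univ.filter p) hne
  refine ⟨u, (Finset.mem_filter.1 hu).2, ?_⟩
  rwa [G.neighborFinset_eq_filter, Finset.filter_comm]

theorem exists_special_vertex_of_two_degenerate {V : Type*} [Fintype V] [DecidableEq V]
    (G : SimpleGraph V) [DecidableRel G.Adj]
    (hdeg : G.IsKDegenerate 2) (h : ∃ v : V, 3 ≤ G.degree v) :
    ∃ u : V, 3 ≤ G.degree u ∧
      ((G.neighborFinset u).filter fun x => 2 < G.degree x).card ≤ 2 :=
  exists_special_vertex_of_two_degenerate_general G hdeg (fun x => 2 < G.degree x) h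
end

section
/- Let G be a finite simple graph, let u be a vertex of G with d(u) ≥ 3 that has two neighbors u₁ and u₂ such that every neighbor of u other than u₁ and u₂ has degree exactly 2 in G. Let v be a neighbor of u of degree 2 with v ∉ {u₁, u₂}, let w be the neighbor of v other than u, and let t be the number of common neighbors of u and w that have degree exactly 2 in G. Let N₂(uv) denote the set of edges xy of G, other than uv itself, such that x or y is adjacent to u or to v. Then |N₂(uv)| ≤ d(u₁) + d(u₂) + d(w) + 2·d(u) − 5 − t. -/
open Classical

/-!
An edge of `N₂(uv)` meets `N(u)` or `N(v)`. At most `∑ x ∈ N(u), d(x)` edges meet `N(u)`, and an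
edge at a vertex `y` that avoids `N(u)` has its other end in `N(y) \ N(u)`. So for every edge `uv`

  `|N₂(uv)| + 1 ≤ ∑ x ∈ N(u), d(x) + ∑ y ∈ N(v), |N(y) \ N(u)|`,

the extra `1` accounting for `uv` itself. When `N(v) = {u, w}` the last sum is
`|N(w) \ N(u)| = d(w) - |N(u) ∩ N(w)|`, and the degrees of the neighbours of `u` other than `u₁`
and `u₂` add up to at most `2 (d(u) - 2)`.
-/

open Finset

theorem sum_le_sum_add_card_sdiff_nsmul {ι M : Type*} [DecidableEq ι] [AddCommMonoid M]
    [Preorder M] [AddLeftMono M] {s t : Finset ι} (hst : s ⊆ t) (f : ι → M) (k : M)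
    (hk : ∀ i ∈ t \ s, f i ≤ k) : ∑ i ∈ t, f i ≤ ∑ i ∈ s, f i + #(t \ s) • k := by
  rw [← sum_sdiff hst, add_comm]
  exact add_le_add_right (sum_le_card_nsmul _ _ _ hk) _

theorem sum_degree_neighborFinset_add_four_le {V : Type*} {G : SimpleGraph V} [G.LocallyFinite]
    {u u₁ u₂ : V} (hu₁ : G.Adj u u₁) (hu₂ : G.Adj u u₂) (hu₁u₂ : u₁ ≠ u₂)
    (hother : ∀ x, G.Adj u x → x ≠ u₁ → x ≠ u₂ → G.degree x ≤ 2) :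
    ∑ x ∈ G.neighborFinset u, G.degree x + 4 ≤ G.degree u₁ + G.degree u₂ + 2 * G.degree u := by
  have hpair : {u₁, u₂} ⊆ G.neighborFinset u := by simp [insert_subset_iff, hu₁, hu₂]
  have hsum := sum_le_sum_add_card_sdiff_nsmul hpair (fun x => G.degree x) 2 fun x hx => by
    simp only [mem_sdiff, SimpleGraph.mem_neighborFinset, mem_insert, mem_singleton,
      not_or] at hx
    exact hother x hx.1 hx.2.1 hx.2.2
  have hcard := card_sdiff_add_card_eq_card hpair
  rw [card_pair hu₁u₂, G.card_neighborFinset_eq_degree] at hcard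
  rw [sum_pair hu₁u₂, smul_eq_mul] at hsum
  lia

section LocallyFinite

variable {V : Type*} [DecidableEq V] (G : SimpleGraph V)

theorem neighborFinset_eq_pair {v a b : V} [Fintype (G.neighborSet v)] (ha : G.Adj v a)
    (hb : G.Adj v b) (hab : a ≠ b) (hdv : G.degree v = 2) : G.neighborFinset v = {a, b} := by
  refine (eq_of_subset_of_card_le ?_ ?_).symm
  · simp [insert_subset_iff, ha, hb]
  · rw [G.card_neighborFinset_eq_degree, hdv, card_pair hab]

variable [G.LocallyFinite]

/-- The edges of `G` with at least one end in `S`. Taking a union of incidence sets keeps this a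
`Finset` in every locally finite graph. -/
def edgesMeeting (S : Finset V) : Finset (Sym2 V) :=
  S.biUnion fun x => G.incidenceFinset x

variable {G} in
theorem mem_edgesMeeting {S : Finset V} {e : Sym2 V} :
    e ∈ edgesMeeting G S ↔ e ∈ G.edgeSet ∧ ∃ x ∈ e, x ∈ S := by
  simp only [edgesMeeting, mem_biUnion, SimpleGraph.mem_incidenceFinset,
    SimpleGraph.incidenceSet, Set.mem_sep_iff]
  tauto

theorem card_edgesMeeting_le_sum_degree (S : Finset V) :
    #(edgesMeeting G S) ≤ ∑ x ∈ S, G.degree x := by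
  simpa only [edgesMeeting, G.card_incidenceFinset_eq_degree] using
    card_biUnion_le (s := S) (t := fun x => G.incidenceFinset x)

theorem incidenceFinset_sdiff_edgesMeeting_subset (S : Finset V) (y : V) :
    G.incidenceFinset y \ edgesMeeting G S ⊆ (G.neighborFinset y \ S).image (s(y, ·)) := by
  intro e he
  rw [mem_sdiff, SimpleGraph.mem_incidenceFinset] at he
  obtain ⟨⟨heG, z, rfl⟩, heS⟩ := he
  have hzS : z ∉ S := fun hz => heS (mem_edgesMeeting.2 ⟨heG, z, Sym2.mem_mk_right y z, hz⟩)
  exact mem_image_of_mem _ (mem_sdiff.2 ⟨(G.mem_neighborFinset y z).2 heG, hzS⟩)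

theorem card_edgesMeeting_union_le (S T : Finset V) :
    #(edgesMeeting G (S ∪ T)) ≤ #(edgesMeeting G S) + ∑ y ∈ T, #(G.neighborFinset y \ S) := by
  have hcover : edgesMeeting G (S ∪ T) ⊆
      edgesMeeting G S ∪ T.biUnion fun y => (G.neighborFinset y \ S).image (s(y, ·)) := by
    rw [edgesMeeting, union_biUnion, ← edgesMeeting, ← union_sdiff_self_eq_union]
    refine union_subset_union_right fun e he => ?_
    obtain ⟨heT, heS⟩ := mem_sdiff.1 he
    obtain ⟨y, hyT, hey⟩ := mem_biUnion.1 heT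
    exact mem_biUnion.2
      ⟨y, hyT, incidenceFinset_sdiff_edgesMeeting_subset G S y (mem_sdiff.2 ⟨hey, heS⟩)⟩
  calc #(edgesMeeting G (S ∪ T))
      ≤ #(edgesMeeting G S) +
          #(T.biUnion fun y => (G.neighborFinset y \ S).image (s(y, ·))) :=
        (card_le_card hcover).trans (card_union_le _ _)
    _ ≤ #(edgesMeeting G S) + ∑ y ∈ T, #(G.neighborFinset y \ S) := by
        gcongr
        exact card_biUnion_le.trans (sum_le_sum fun _ _ => card_image_le)

/-- The set `N₂(uv)` of edges other than `uv` that have an end adjacent to `u` or to `v`. -/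
def strongNeighborhood (u v : V) : Finset (Sym2 V) :=
  (edgesMeeting G (G.neighborFinset u ∪ G.neighborFinset v)).erase s(u, v)

variable {G} in
theorem mem_strongNeighborhood {u v : V} {e : Sym2 V} :
    e ∈ strongNeighborhood G u v ↔
      e ∈ G.edgeSet ∧ e ≠ s(u, v) ∧ ∃ x ∈ e, G.Adj x u ∨ G.Adj x v := by
  simp only [strongNeighborhood, mem_erase, mem_edgesMeeting, mem_union,
    SimpleGraph.mem_neighborFinset, G.adj_comm u, G.adj_comm v]
  exact and_left_comm

variable {G}

theorem card_strongNeighborhood_add_one_le {u v : V} (huv : G.Adj u v) :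
    #(strongNeighborhood G u v) + 1 ≤
      ∑ x ∈ G.neighborFinset u, G.degree x +
        ∑ y ∈ G.neighborFinset v, #(G.neighborFinset y \ G.neighborFinset u) := by
  have huv_mem : s(u, v) ∈ edgesMeeting G (G.neighborFinset u ∪ G.neighborFinset v) :=
    mem_edgesMeeting.2 ⟨huv, v, Sym2.mem_mk_right u v, by simp [huv]⟩
  rw [strongNeighborhood, card_erase_add_one huv_mem]
  grw [card_edgesMeeting_union_le, card_edgesMeeting_le_sum_degree]

theorem card_strongNeighborhood_add_card_inter_lt {u v w : V} (huv : G.Adj u v)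
    (hdv : G.degree v = 2) (hw : G.Adj v w) (hwu : w ≠ u) :
    #(strongNeighborhood G u v) + #(G.neighborFinset u ∩ G.neighborFinset w) <
      ∑ x ∈ G.neighborFinset u, G.degree x + G.degree w := by
  have hcard := card_strongNeighborhood_add_one_le huv
  rw [neighborFinset_eq_pair G huv.symm hw hwu.symm hdv, sum_pair hwu.symm, Finset.sdiff_self,
    card_empty, zero_add] at hcard
  have hdw := card_sdiff_add_card_inter (G.neighborFinset w) (G.neighborFinset u)
  rw [inter_comm, G.card_neighborFinset_eq_degree] at hdw
  lia

theorem card_strong_neighborhood_edges_le_general {u u₁ u₂ v w : V}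
    (hu₁ : G.Adj u u₁) (hu₂ : G.Adj u u₂) (hu₁u₂ : u₁ ≠ u₂)
    (hother : ∀ x, G.Adj u x → x ≠ u₁ → x ≠ u₂ → G.degree x ≤ 2)
    (hv : G.Adj u v) (hdv : G.degree v = 2) (hw : G.Adj v w) (hwu : w ≠ u) :
    (#(strongNeighborhood G u v) : ℤ) ≤
      G.degree u₁ + G.degree u₂ + G.degree w + 2 * G.degree u - 5 -
        #(G.neighborFinset u ∩ G.neighborFinset w) := by
  have hlt := card_strongNeighborhood_add_card_inter_lt hv hdv hw hwu
  have hsum := sum_degree_neighborFinset_add_four_le hu₁ hu₂ hu₁u₂ hother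
  lia

end LocallyFinite

theorem filter_edgeFinset_eq_strongNeighborhood {V : Type*} [Fintype V] [DecidableEq V]
    (G : SimpleGraph V) [DecidableRel G.Adj] (u v : V) :
    (G.edgeFinset.filter fun e => e ≠ s(u, v) ∧ ∃ x ∈ e, G.Adj x u ∨ G.Adj x v) =
      strongNeighborhood G u v := by
  ext e
  rw [mem_filter, SimpleGraph.mem_edgeFinset, mem_strongNeighborhood]

theorem card_strong_neighborhood_edges_le {V : Type*} [Fintype V] [DecidableEq V]
    (G : SimpleGraph V) [DecidableRel G.Adj] (u u₁ u₂ v w : V)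
    (hdu : 3 ≤ G.degree u)
    (hu₁ : G.Adj u u₁) (hu₂ : G.Adj u u₂) (hu₁u₂ : u₁ ≠ u₂)
    (hother : ∀ x, G.Adj u x → x ≠ u₁ → x ≠ u₂ → G.degree x = 2)
    (hv : G.Adj u v) (hdv : G.degree v = 2) (hvu₁ : v ≠ u₁) (hvu₂ : v ≠ u₂)
    (hw : G.Adj v w) (hwu : w ≠ u)
    (t : ℕ)
    (ht : t = ((G.neighborFinset u ∩ G.neighborFinset w).filter
      fun x => G.degree x = 2).card) :
    ((G.edgeFinset.filter fun e =>
        e ≠ s(u, v) ∧ ∃ x ∈ e, G.Adj x u ∨ G.Adj x v).card : ℤ) ≤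
      (G.degree u₁ : ℤ) + G.degree u₂ + G.degree w + 2 * G.degree u - 5 - t := by
  grw [filter_edgeFinset_eq_strongNeighborhood, ht, card_filter_le]
  exact card_strong_neighborhood_edges_le_general hu₁ hu₂ hu₁u₂
    (fun x hx hx₁ hx₂ => (hother x hx hx₁ hx₂).le) hv hdv hw hwu
end
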